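/- arXiv:1812.04705 — 3 statements merged into one kernel-verified Lean document; each statement's English description precedes it below -/
import Mathlib

section
/- Let ν be a partition, α a composition of |ν|, T ∈ Tab(ν,α), and R_α a ribbon with row lengths α_1,…,α_{ℓ(α)} from top to bottom in which consecutive rows share at most one column. Let φ_{R_α}(T) be the filling of R_α whose reading word (rows right to left, top to bottom) equals the word w_{T̂} = w_1⋯w_{|α|}, where w_u is the index of the row of T̂ containing the entry u. Then φ_{R_α}(T) is an LR tableau of content ν if and only if, whenever rows j and j+1 of R_α share a column, the number α_1+⋯+α_j belongs to the descent set of T̂. -/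
namespace RibbonSupport

/-- A partition: a weakly decreasing list of positive integers. -/
def IsPartition (a : List ℕ) : Prop := a.Pairwise (· ≥ ·) ∧ ∀ x ∈ a, 0 < x

/-- All parts of the list are at least `m`. -/
def PartsGE (a : List ℕ) (m : ℕ) : Prop := ∀ x ∈ a, m ≤ x

/-- Dominance order `lam ⪯ mu` on partitions of the same size. -/
def DomLE (lam mu : List ℕ) : Prop :=
  lam.sum = mu.sum ∧ ∀ i, (lam.take i).sum ≤ (mu.take i).sum

/-- The number of nonzero parts. -/
def lenp (p : List ℕ) : ℕ := p.countP (fun x => decide (x ≠ 0))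

/-- `p` is an overlapping partition for the monotone ribbon with row lengths `a`:
`p` has the same length as `a`, its last entry is `0`, and consecutive entries
decrease by `0` or `1`. -/
def IsOverlapSeq (a p : List ℕ) : Prop :=
  p.length = a.length ∧ p.getD (a.length - 1) 0 = 0 ∧
    ∀ i, i + 1 < a.length →
      p.getD i 0 = p.getD (i + 1) 0 ∨ p.getD i 0 = p.getD (i + 1) 0 + 1

/-- Rows `i` and `i+1` (0-based, top to bottom) of `R_a^p` overlap
(share exactly one column) exactly when `p_i = p_{i+1} + 1`. -/
def ovOf (p : List ℕ) : ℕ → Bool := fun i => decide (p.getD i 0 = p.getD (i + 1) 0 + 1)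

def rowOffset (a : List ℕ) (i : ℕ) : ℕ := (a.take i).sum

/-- `w` is the reading word (rows right-to-left, top to bottom) of a semistandard filling of
the ribbon with row lengths `a` (top to bottom) in which consecutive rows `i`, `i+1` share
exactly one column when `ov i = true` and no column otherwise.  Semistandardness amounts to:
within each row block the word is weakly decreasing (rows weakly increase left to right), and
at each overlapping gap the word strictly increases (columns strictly increase downwards). -/
def IsRibbonWord (a : List ℕ) (ov : ℕ → Bool) (w : List ℕ) : Prop :=
  w.length = a.sum ∧
  (∀ i j, i < a.length → j + 1 < a.getD i 0 →
    w.getD (rowOffset a i + j + 1) 0 ≤ w.getD (rowOffset a i + j) 0) ∧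
  (∀ i, i + 1 < a.length → ov i = true →
    w.getD (rowOffset a (i + 1) - 1) 0 < w.getD (rowOffset a (i + 1)) 0)

/-- Yamanouchi (lattice) word: each prefix has at least as many letters `j` as `j+1`. -/
def IsYam (w : List ℕ) : Prop := ∀ k j, (w.take k).count (j + 2) ≤ (w.take k).count (j + 1)

/-- The word `w` has content `nu` (and only positive letters). -/
def HasContent (w : List ℕ) (nu : List ℕ) : Prop :=
  (∀ j, w.count (j + 1) = nu.getD j 0) ∧ w.count 0 = 0

/-- There is an LR filling of the ribbon `(a, ov)` with content `nu`. -/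
def InSupportOv (a : List ℕ) (ov : ℕ → Bool) (nu : List ℕ) : Prop :=
  ∃ w : List ℕ, IsRibbonWord a ov w ∧ IsYam w ∧ HasContent w nu

/-- `nu` is in the Schur support of the monotone ribbon `R_a^p`. -/
def InSupport (a p nu : List ℕ) : Prop := InSupportOv a (ovOf p) nu

/-- `nu` is in the Schur support of the connected ribbon `R_a`. -/
def InSupportConn (a nu : List ℕ) : Prop := InSupportOv a (fun _ => true) nu

/-- `nu` belongs to the Schur interval `[a, (|a| - p₁, p₁)]` in dominance order. -/
def InInterval (a p nu : List ℕ) : Prop :=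
  DomLE a nu ∧ DomLE nu [a.sum - p.getD 0 0, p.getD 0 0]

/-- The Schur support of `R_a^p`, as a set of partitions. -/
def SupportSet (a p : List ℕ) : Set (List ℕ) := {nu | IsPartition nu ∧ InSupport a p nu}

/-- The Schur interval of `R_a^p`, as a set of partitions. -/
def IntervalSet (a p : List ℕ) : Set (List ℕ) := {nu | IsPartition nu ∧ InInterval a p nu}

/-- `R_a^p` has full Schur support. -/
def FullSupport (a p : List ℕ) : Prop := SupportSet a p = IntervalSet a p

/-- The Schur support of the connected ribbon `R_a`, as a set of partitions. -/
def SupportSetConn (a : List ℕ) : Set (List ℕ) := {nu | IsPartition nu ∧ InSupportConn a nu}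

/-- `ϱ_i` (1-based `i`): `Σ_{q=i+1}^{ℓ(a)} a_q − p_{i+1} + 1`. -/
def rho (a p : List ℕ) (i : ℕ) : ℕ := (a.drop i).sum + 1 - p.getD i 0

/-- Entry `j` (1-based) of the `i`-witness vector: `[ϱ_i − a_j]₊`. -/
def wit (a p : List ℕ) (i j : ℕ) : ℕ := rho a p i - a.getD (j - 1) 0

/-- Size of the `i`-witness vector. -/
def witSize (a p : List ℕ) (i : ℕ) : ℕ := ∑ j ∈ Finset.Icc 1 i, wit a p i j

/-! ### Tableaux -/

/-- Cells (0-based `(row, column)`) of the Young diagram of `lam`. -/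
def cells (lam : List ℕ) : Finset (ℕ × ℕ) :=
  (Finset.range lam.length ×ˢ Finset.range (lam.sum + 1)).filter
    (fun x => x.2 < lam.getD x.1 0)

/-- `T` is a semistandard Young tableau of shape `lam` and content `al`
(normalized to vanish off the diagram). -/
def IsTab (lam al : List ℕ) (T : ℕ × ℕ → ℕ) : Prop :=
  (∀ x, x ∉ cells lam → T x = 0) ∧
  (∀ x ∈ cells lam, 1 ≤ T x) ∧
  (∀ i c, (i, c + 1) ∈ cells lam → T (i, c) ≤ T (i, c + 1)) ∧
  (∀ i c, (i + 1, c) ∈ cells lam → T (i, c) < T (i + 1, c)) ∧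
  (∀ k, ((cells lam).filter (fun x => T x = k + 1)).card = al.getD k 0)

/-- Standardization of a tableau: entries are renumbered `1, …, N` in increasing order of
value, entries of equal value being numbered from southwest to northeast (by column). -/
def stdz (lam : List ℕ) (T : ℕ × ℕ → ℕ) : ℕ × ℕ → ℕ := fun x =>
  if x ∈ cells lam then
    ((cells lam).filter (fun y => T y < T x ∨ (T y = T x ∧ y.2 < x.2))).card + 1
  else 0

/-- `n` is a descent of the standard tableau `U`: the entry `n+1` lies in a strictly
lower row than the entry `n`. -/
def IsDescent (lam : List ℕ) (U : ℕ × ℕ → ℕ) (n : ℕ) : Prop :=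
  ∃ x ∈ cells lam, ∃ y ∈ cells lam, U x = n ∧ U y = n + 1 ∧ x.1 < y.1

/-- `S(al)`: the set of proper partial sums of the composition `al`. -/
def Sset (al : List ℕ) : Set ℕ := {n | ∃ k, 0 < k ∧ k < al.length ∧ n = (al.take k).sum}

/-- `s ∈ D(T)`: some entry `s+1` of `T` lies in a strictly lower row than some entry `s`. -/
def TabDescent (lam : List ℕ) (T : ℕ × ℕ → ℕ) (s : ℕ) : Prop :=
  ∃ x ∈ cells lam, ∃ y ∈ cells lam, T x = s ∧ T y = s + 1 ∧ x.1 < y.1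

/-- The word `w_{T̂}` of `T`: its `u`-th letter (1-based) is the 1-based row index of the
entry `u` of the standardization `T̂` of `T`. -/
def wordOf (lam : List ℕ) (T : ℕ × ℕ → ℕ) : List ℕ :=
  (List.range lam.sum).map fun n =>
    ∑ x ∈ (cells lam).filter (fun x => stdz lam T x = n + 1), (x.1 + 1)

/-- `j ∈ {2, …, ℓ(al)}` is a critical number of `T ∈ Tab(lam, al)`:
`w_{α_1+⋯+α_{j-1}} = w_{α_1+⋯+α_{j-1}+1}` in the word of `T`. -/
def CriticalNum (lam al : List ℕ) (T : ℕ × ℕ → ℕ) (j : ℕ) : Prop :=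
  2 ≤ j ∧ j ≤ al.length ∧
    (wordOf lam T).getD ((al.take (j - 1)).sum - 1) 0 =
      (wordOf lam T).getD ((al.take (j - 1)).sum) 0

/-- `j ∈ {2, …, ℓ(al)}` is a negligible critical number of `T`:
`w_{α_1+⋯+α_{j-1}} > w_{α_1+⋯+α_{j-1}+1}` in the word of `T`. -/
def NegligibleNum (lam al : List ℕ) (T : ℕ × ℕ → ℕ) (j : ℕ) : Prop :=
  2 ≤ j ∧ j ≤ al.length ∧
    (wordOf lam T).getD ((al.take (j - 1)).sum) 0 <
      (wordOf lam T).getD ((al.take (j - 1)).sum - 1) 0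

/-- The overlapping partition of the ribbon encoded by its gap pattern `b`
(`b j = true` iff rows `j` and `j+1`, 0-based, overlap). -/
def povOf (b : List Bool) : List ℕ :=
  (List.range (b.length + 1)).map fun i => (b.drop i).count true

/-! ### Connected ribbons with rows in arbitrary order -/

/-- Starting column (0-based) of row `i` of the connected ribbon with row lengths `b`. -/
def startConn (b : List ℕ) (i : ℕ) : ℕ := (b.drop (i + 1)).sum + (i + 1) - b.length

/-- Number of columns of the connected ribbon with row lengths `b`. -/
def ncols (b : List ℕ) : ℕ := b.sum + 1 - b.length

/-- Length of column `c` of the connected ribbon with row lengths `b`. -/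
def colLen (b : List ℕ) (c : ℕ) : ℕ :=
  ((Finset.range b.length).filter
    (fun i => startConn b i ≤ c ∧ c < startConn b i + b.getD i 0)).card

/-- Deletion rank of row `j`: the number of rows deleted strictly before row `j` when one
repeatedly deletes a longest remaining row in highest (most northern) position. -/
def delRank (g : List ℕ) (j : ℕ) : ℕ :=
  ((Finset.range g.length).filter
    (fun j' => g.getD j 0 < g.getD j' 0 ∨ (g.getD j' 0 = g.getD j 0 ∧ j' < j))).card

/-- The overlapping partition of the connected ribbon with row lengths `g`:
its `(d+1)`-st entry is the number of length-two columns of the ribbon remaining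
after deleting `d` rows as above, i.e. the number of adjacent pairs of surviving rows. -/
def ppiList (g : List ℕ) : List ℕ :=
  (List.range g.length).map fun d =>
    ((Finset.range (g.length - 1)).filter
      (fun j => d ≤ delRank g j ∧ d ≤ delRank g (j + 1))).card


theorem mem_cells_iff (nu : List ℕ) (i c : ℕ) : (i, c) ∈ cells nu ↔ c < nu.getD i 0 := by
  unfold cells
  simp only [Finset.mem_filter, Finset.mem_product, Finset.mem_range]
  constructor
  · exact fun h => h.2
  · intro h
    have hi : i < nu.length := by
      by_contra hi
      rw [List.getD_eq_default _ _ (by omega)] at h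
      omega
    have h2 : nu.getD i 0 ≤ nu.sum := by
      rw [List.getD_eq_getElem _ _ hi]
      exact List.single_le_sum (by simp) _ (List.getElem_mem hi)
    exact ⟨⟨hi, by omega⟩, h⟩

theorem card_row (nu : List ℕ) (i : ℕ) :
    ((cells nu).filter (fun x => x.1 = i)).card = nu.getD i 0 := by
  have : (cells nu).filter (fun x => x.1 = i) =
      (Finset.range (nu.getD i 0)).image (fun c => (i, c)) := by
    ext ⟨a, c⟩
    simp only [Finset.mem_filter, mem_cells_iff, Finset.mem_image, Finset.mem_range, Prod.mk.injEq]
    constructor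
    · rintro ⟨h, rfl⟩; exact ⟨c, h, rfl, rfl⟩
    · rintro ⟨d, h, rfl, rfl⟩; exact ⟨h, rfl⟩
  rw [this, Finset.card_image_of_injective, Finset.card_range]
  intro a b h
  simpa using h

theorem sum_getD (l : List ℕ) : ∑ i ∈ Finset.range l.length, l.getD i 0 = l.sum := by
  induction l with
  | nil => simp
  | cons a l ih =>
    rw [List.length_cons, Finset.sum_range_succ']
    simp only [List.getD_cons_succ, List.getD_cons_zero, ih, List.sum_cons]
    omega

theorem offset_succ (l : List ℕ) (i : ℕ) :
    (l.take (i + 1)).sum = (l.take i).sum + l.getD i 0 := by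
  induction l generalizing i with
  | nil => simp
  | cons a l ih =>
    cases i with
    | zero => simp
    | succ i => simp only [List.take_succ_cons, List.sum_cons, ih, List.getD_cons_succ]; omega

theorem offset_mono (l : List ℕ) : Monotone (fun i => (l.take i).sum) := by
  apply monotone_nat_of_le_succ
  intro i
  simp only [offset_succ]
  omega

theorem offset_le (l : List ℕ) (i : ℕ) : (l.take i).sum ≤ l.sum := by
  have h := List.sum_take_add_sum_drop l i
  omega

theorem card_cells (nu : List ℕ) : (cells nu).card = nu.sum := by
  rw [Finset.card_eq_sum_card_fiberwise (f := Prod.fst) (t := Finset.range nu.length)]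
  · simp only [card_row, sum_getD]
  · rintro ⟨i, c⟩ h
    simp only [Finset.mem_coe, cells, Finset.mem_filter, Finset.mem_product] at h
    exact h.1.1

theorem row_anti {nu : List ℕ} (h : IsPartition nu) {i k : ℕ} (hik : i ≤ k) :
    nu.getD k 0 ≤ nu.getD i 0 := by
  by_cases hk : k < nu.length
  · rcases hik.eq_or_lt with rfl | hlt
    · exact le_rfl
    · rw [List.getD_eq_getElem _ _ hk, List.getD_eq_getElem _ _ (by omega)]
      exact List.pairwise_iff_getElem.1 h.1 i k (by omega) hk hlt
  · rw [List.getD_eq_default _ _ (by omega)]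
    omega

section
variable {nu al : List ℕ} {T : ℕ × ℕ → ℕ}

theorem row_le (hT : IsTab nu al T) {i c d : ℕ} (hcd : c ≤ d) (hd : (i, d) ∈ cells nu) :
    T (i, c) ≤ T (i, d) := by
  induction d, hcd using Nat.le_induction with
  | base => exact le_rfl
  | succ d hcd ih =>
    have h1 := hT.2.2.1 i d hd
    have h2 : (i, d) ∈ cells nu := by
      rw [mem_cells_iff] at hd ⊢; omega
    exact (ih h2).trans h1

theorem col_lt (hnu : IsPartition nu) (hT : IsTab nu al T) {i k c : ℕ} (hik : i < k)
    (hk : (k, c) ∈ cells nu) : T (i, c) < T (k, c) := by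
  induction k, hik using Nat.le_induction with
  | base => exact hT.2.2.2.1 i c hk
  | succ k hik ih =>
    have h1 := hT.2.2.2.1 k c hk
    have h2 : (k, c) ∈ cells nu := by
      rw [mem_cells_iff] at hk ⊢
      exact hk.trans_le (row_anti hnu (by omega))
    exact (ih h2).trans h1

/-- The total order on cells given by standardization. -/
def before (T : ℕ × ℕ → ℕ) (y x : ℕ × ℕ) : Prop := T y < T x ∨ (T y = T x ∧ y.2 < x.2)

theorem stdz_lt {x y : ℕ × ℕ} (hx : x ∈ cells nu) (hy : y ∈ cells nu)
    (h : before T y x) : stdz nu T y < stdz nu T x := by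
  unfold before at h
  simp only [stdz, hx, hy, if_true]
  apply Nat.add_lt_add_right
  apply Finset.card_lt_card
  rw [Finset.ssubset_iff_of_subset]
  · exact ⟨y, by simp [hy, h], by simp⟩
  · intro z hz
    simp only [Finset.mem_filter] at hz ⊢
    refine ⟨hz.1, ?_⟩
    omega

theorem tri (hnu : IsPartition nu) (hT : IsTab nu al T) {x y : ℕ × ℕ} (hx : x ∈ cells nu)
    (hy : y ∈ cells nu) : before T x y ∨ x = y ∨ before T y x := by
  obtain ⟨i, c⟩ := x
  obtain ⟨k, d⟩ := y
  unfold before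
  rcases lt_trichotomy (T (i, c)) (T (k, d)) with h | h | h
  · exact Or.inl (Or.inl h)
  · rcases lt_trichotomy c d with h' | h' | h'
    · exact Or.inl (Or.inr ⟨h, h'⟩)
    · subst h'
      rcases lt_trichotomy i k with h'' | h'' | h''
      · exact absurd h (col_lt hnu hT h'' hy).ne
      · subst h''; exact Or.inr (Or.inl rfl)
      · exact absurd h (col_lt hnu hT h'' hx).ne'
    · exact Or.inr (Or.inr (Or.inr ⟨h.symm, h'⟩))
  · exact Or.inr (Or.inr (Or.inl h))

theorem before_of_lt (hnu : IsPartition nu) (hT : IsTab nu al T) {x y : ℕ × ℕ}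
    (hx : x ∈ cells nu) (hy : y ∈ cells nu) (h : stdz nu T x < stdz nu T y) : before T x y := by
  rcases tri hnu hT hx hy with h1 | rfl | h1
  · exact h1
  · omega
  · have := stdz_lt hx hy h1
    omega

theorem stdz_inj (hnu : IsPartition nu) (hT : IsTab nu al T) {x y : ℕ × ℕ}
    (hx : x ∈ cells nu) (hy : y ∈ cells nu) (h : stdz nu T x = stdz nu T y) : x = y := by
  rcases tri hnu hT hx hy with h1 | h1 | h1
  · have := stdz_lt hy hx h1
    omega
  · exact h1
  · have := stdz_lt hx hy h1
    omega

theorem stdz_pos {x : ℕ × ℕ} (hx : x ∈ cells nu) : 1 ≤ stdz nu T x := by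
  simp only [stdz, hx, if_true]; omega

theorem stdz_le {x : ℕ × ℕ} (hx : x ∈ cells nu) : stdz nu T x ≤ nu.sum := by
  simp only [stdz, hx, if_true]
  rw [← card_cells, Nat.succ_le_iff]
  apply Finset.card_lt_card
  rw [Finset.ssubset_iff_of_subset (Finset.filter_subset _ _)]
  exact ⟨x, hx, by simp⟩

theorem stdz_image (hnu : IsPartition nu) (hT : IsTab nu al T) :
    (cells nu).image (stdz nu T) = Finset.Icc 1 nu.sum := by
  apply Finset.eq_of_subset_of_card_le
  · intro n hn
    obtain ⟨x, hx, rfl⟩ := Finset.mem_image.1 hn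
    exact Finset.mem_Icc.2 ⟨stdz_pos hx, stdz_le hx⟩
  · rw [Finset.card_image_of_injOn, card_cells]
    · simp
    · intro x hx y hy h
      exact stdz_inj hnu hT hx hy h

theorem stdz_surj (hnu : IsPartition nu) (hT : IsTab nu al T) {n : ℕ} (hn : n < nu.sum) :
    ∃ x ∈ cells nu, stdz nu T x = n + 1 := by
  have : n + 1 ∈ (cells nu).image (stdz nu T) := by
    rw [stdz_image hnu hT, Finset.mem_Icc]; omega
  exact Finset.mem_image.1 this

theorem letter (hnu : IsPartition nu) (hT : IsTab nu al T) {x : ℕ × ℕ} {n : ℕ}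
    (hx : x ∈ cells nu) (h : stdz nu T x = n + 1) :
    ∑ x ∈ (cells nu).filter (fun x => stdz nu T x = n + 1), (x.1 + 1) = x.1 + 1 := by
  have : (cells nu).filter (fun x => stdz nu T x = n + 1) = {x} := by
    ext y
    simp only [Finset.mem_filter, Finset.mem_singleton]
    constructor
    · rintro ⟨hy, h'⟩
      exact stdz_inj hnu hT hy hx (h'.trans h.symm)
    · rintro rfl; exact ⟨hx, h⟩
  rw [this, Finset.sum_singleton]

theorem word_getD (hnu : IsPartition nu) (hT : IsTab nu al T) {x : ℕ × ℕ} {n : ℕ}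
    (hx : x ∈ cells nu) (h : stdz nu T x = n + 1) : (wordOf nu T).getD n 0 = x.1 + 1 := by
  have hn : n < nu.sum := by
    have := stdz_le (T := T) hx
    omega
  rw [List.getD_eq_getElem _ _ (by simpa [wordOf] using hn)]
  simp only [wordOf, List.getElem_map, List.getElem_range]
  exact letter hnu hT hx h

theorem count_map_range (f : ℕ → ℕ) (k v : ℕ) :
    ((List.range k).map f).count v = ((Finset.range k).filter (fun n => f n = v)).card := by
  induction k with
  | zero => simp
  | succ k ih =>
    rw [List.range_succ, List.map_append, List.count_append, ih, Finset.range_add_one,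
      Finset.filter_insert]
    by_cases h : f k = v
    · simp [h]
    · simp [h]

theorem count_take (hnu : IsPartition nu) (hT : IsTab nu al T) (k j : ℕ) :
    ((wordOf nu T).take k).count (j + 1) =
      ((cells nu).filter (fun x => x.1 = j ∧ stdz nu T x ≤ k)).card := by
  unfold wordOf
  rw [← List.map_take, List.take_range, count_map_range]
  symm
  apply Finset.card_bij (fun x _ => stdz nu T x - 1)
  · intro x hx
    simp only [Finset.mem_filter, Finset.mem_range] at hx ⊢
    obtain ⟨hx, hj, hk⟩ := hx
    have h1 := stdz_pos (T := T) hx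
    have h2 := stdz_le (T := T) hx
    refine ⟨by omega, ?_⟩
    rw [letter hnu hT hx (by omega), hj]
  · intro x hx y hy h
    simp only [Finset.mem_filter] at hx hy
    have h1 := stdz_pos (T := T) hx.1
    have h2 := stdz_pos (T := T) hy.1
    exact stdz_inj hnu hT hx.1 hy.1 (by omega)
  · intro n hn
    simp only [Finset.mem_filter, Finset.mem_range] at hn
    obtain ⟨hn, hs⟩ := hn
    obtain ⟨x, hx, hxn⟩ := stdz_surj hnu hT (n := n) (by omega)
    rw [letter hnu hT hx hxn] at hs
    refine ⟨x, ?_, by omega⟩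
    simp only [Finset.mem_filter]
    exact ⟨hx, by omega, by omega⟩

theorem word_yam (hnu : IsPartition nu) (hT : IsTab nu al T) : IsYam (wordOf nu T) := by
  intro k j
  rw [count_take hnu hT, count_take hnu hT]
  apply Finset.card_le_card_of_injOn (fun x => (j, x.2))
  · rintro ⟨i, c⟩ hx
    simp only [Finset.mem_coe, Finset.mem_filter] at hx ⊢
    obtain ⟨hx, rfl, hk⟩ := hx
    have hm : (j, c) ∈ cells nu := by
      rw [mem_cells_iff] at hx ⊢
      exact hx.trans_le (row_anti hnu (by omega))
    refine ⟨hm, trivial, ?_⟩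
    have := stdz_lt hx hm (Or.inl (hT.2.2.2.1 j c hx))
    omega
  · rintro ⟨i, c⟩ hx ⟨i', c'⟩ hy h
    simp only [Finset.mem_coe, Finset.mem_filter, Prod.mk.injEq] at hx hy h ⊢
    omega

theorem word_content (hnu : IsPartition nu) (hT : IsTab nu al T) :
    HasContent (wordOf nu T) nu := by
  constructor
  · intro j
    have h := count_take hnu hT nu.sum j
    rw [List.take_of_length_le (by simp [wordOf])] at h
    rw [h, ← card_row]
    congr 1
    apply Finset.filter_congr
    intro x hx
    simp [stdz_le hx]
  · rw [List.count_eq_zero]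
    intro h0
    simp only [wordOf, List.mem_map, List.mem_range] at h0
    obtain ⟨n, hn, h⟩ := h0
    obtain ⟨x, hx, hxn⟩ := stdz_surj hnu hT hn
    rw [letter hnu hT hx hxn] at h
    omega

theorem card_le_val (hT : IsTab nu al T) (m : ℕ) :
    ((cells nu).filter (fun x => T x ≤ m)).card = (al.take m).sum := by
  induction m with
  | zero =>
    rw [List.take_zero, List.sum_nil, Finset.card_eq_zero, Finset.filter_eq_empty_iff]
    intro x hx
    have := hT.2.1 x hx
    omega
  | succ m ih =>
    rw [offset_succ, ← ih, ← hT.2.2.2.2 m, ← Finset.card_union_of_disjoint]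
    · congr 1
      ext x
      simp only [Finset.mem_filter, Finset.mem_union]
      have : T x ≤ m + 1 ↔ T x ≤ m ∨ T x = m + 1 := by omega
      rw [this]; tauto
    · rw [Finset.disjoint_filter]
      intro x _ h
      omega

theorem val_of_stdz (hT : IsTab nu al T) {x : ℕ × ℕ} {i : ℕ} (hx : x ∈ cells nu)
    (h1 : (al.take i).sum < stdz nu T x) (h2 : stdz nu T x ≤ (al.take (i + 1)).sum) :
    T x = i + 1 := by
  obtain ⟨m, hm⟩ : ∃ m, T x = m + 1 := ⟨T x - 1, by have := hT.2.1 x hx; omega⟩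
  have hlo : (al.take m).sum < stdz nu T x := by
    rw [← card_le_val hT m]
    simp only [stdz, hx, if_true]
    rw [Nat.lt_succ_iff]
    apply Finset.card_le_card
    intro y hy
    simp only [Finset.mem_filter] at hy ⊢
    exact ⟨hy.1, by omega⟩
  have hhi : stdz nu T x ≤ (al.take (m + 1)).sum := by
    rw [← card_le_val hT (m + 1)]
    simp only [stdz, hx, if_true]
    rw [Nat.succ_le_iff]
    apply Finset.card_lt_card
    rw [Finset.ssubset_iff_of_subset]
    · exact ⟨x, by simp [hx, hm], by simp⟩
    · intro y hy
      simp only [Finset.mem_filter] at hy ⊢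
      exact ⟨hy.1, by omega⟩
  rcases lt_trichotomy m i with h | h | h
  · have := offset_mono al (show m + 1 ≤ i from h)
    simp only at this
    omega
  · omega
  · have := offset_mono al (show i + 1 ≤ m from h)
    simp only at this
    omega

theorem word_row (hnu : IsPartition nu) (hsum : al.sum = nu.sum) (hT : IsTab nu al T)
    (i j : ℕ) (hj : j + 1 < al.getD i 0) :
    (wordOf nu T).getD (rowOffset al i + j + 1) 0 ≤ (wordOf nu T).getD (rowOffset al i + j) 0 := by
  unfold rowOffset
  have h1 := offset_succ al i
  have h2 := offset_le al (i + 1)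
  obtain ⟨x, hx, hxn⟩ := stdz_surj hnu hT (n := (al.take i).sum + j) (by omega)
  obtain ⟨y, hy, hyn⟩ := stdz_surj hnu hT (n := (al.take i).sum + j + 1) (by omega)
  rw [word_getD hnu hT hx hxn, word_getD hnu hT hy hyn]
  have tx := val_of_stdz hT (i := i) hx (by omega) (by omega)
  have ty := val_of_stdz hT (i := i) hy (by omega) (by omega)
  have hb := before_of_lt hnu hT hx hy (by omega)
  unfold before at hb
  by_contra hlt
  obtain ⟨r, c⟩ := x
  obtain ⟨s, d⟩ := y
  simp only at hlt hb
  have hm : (r, d) ∈ cells nu := by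
    rw [mem_cells_iff] at hy ⊢
    exact hy.trans_le (row_anti hnu (by omega))
  have a1 := row_le hT (show c ≤ d by omega) hm
  have a2 := col_lt hnu hT (show r < s by omega) hy
  omega

theorem descent_iff (hnu : IsPartition nu) (hT : IsTab nu al T) {n : ℕ} (h0 : 0 < n)
    (hn : n < nu.sum) :
    IsDescent nu (stdz nu T) n ↔ (wordOf nu T).getD (n - 1) 0 < (wordOf nu T).getD n 0 := by
  constructor
  · rintro ⟨x, hx, y, hy, hxn, hyn, hlt⟩
    rw [word_getD hnu hT hx (n := n - 1) (by omega), word_getD hnu hT hy hyn]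
    omega
  · intro h
    obtain ⟨x, hx, hxn⟩ := stdz_surj hnu hT (n := n - 1) (by omega)
    obtain ⟨y, hy, hyn⟩ := stdz_surj hnu hT hn
    rw [word_getD hnu hT hx hxn, word_getD hnu hT hy hyn] at h
    exact ⟨x, hx, y, hy, by omega, hyn, by omega⟩

end

/-- Proposition `l2new`: for `T ∈ Tab(nu, al)` and a ribbon with row
lengths `al` and gap-overlap pattern `ov`, the filling `φ_{R_al}(T)` of the ribbon whose
reading word is `w_{T̂}` is an LR tableau of content `nu` iff, whenever rows `j` and `j+1`
of the ribbon share a column, `al₁+⋯+al_j` is a descent of `T̂`. -/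
theorem companion_filling_is_LR_iff_descents
    (nu al : List ℕ) (hnu : IsPartition nu) (hal : ∀ x ∈ al, 0 < x)
    (hsum : al.sum = nu.sum) (ov : ℕ → Bool) (T : ℕ × ℕ → ℕ) (hT : IsTab nu al T) :
    (IsRibbonWord al ov (wordOf nu T) ∧ IsYam (wordOf nu T) ∧
        HasContent (wordOf nu T) nu) ↔
      ∀ g, g + 1 < al.length → ov g = true →
        IsDescent nu (stdz nu T) ((al.take (g + 1)).sum) := by
  have key : ∀ g, g + 1 < al.length →
      0 < (al.take (g + 1)).sum ∧ (al.take (g + 1)).sum < nu.sum := by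
    intro g hg
    have hp : ∀ i, i < al.length → 0 < al.getD i 0 := by
      intro i hi
      rw [List.getD_eq_getElem _ _ hi]
      exact hal _ (List.getElem_mem hi)
    have h1 := offset_succ al g
    have h2 := offset_succ al (g + 1)
    have h3 := offset_le al (g + 1 + 1)
    have h4 := hp g (by omega)
    have h5 := hp (g + 1) hg
    omega
  constructor
  · rintro ⟨h, -, -⟩ g hg ho
    exact (descent_iff hnu hT (key g hg).1 (key g hg).2).2 (h.2.2 g hg ho)
  · intro h
    refine ⟨⟨by simp [wordOf, hsum], fun i j _ hj => word_row hnu hsum hT i j hj, ?_⟩,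
      word_yam hnu hT, word_content hnu hT⟩
    intro g hg ho
    exact (descent_iff hnu hT (key g hg).1 (key g hg).2).1 (h g hg ho)

end RibbonSupport
end

section
/- Let α be a partition with all parts at least 2 and overlapping partition p, and let ν ∈ [α, (|α|−p_1, p_1)] be a partition with ℓ(ν) = ℓ(α) − k for some 1 ≤ k ≤ ℓ(α)−2, satisfying ν_i ≤ Σ_{j=i}^{ℓ(α)} α_j − p_i for all 1 ≤ i ≤ ℓ(α). Then c_{R_α^p}^ν > 0, i.e. there exists an LR tableau of shape R_α^p and content ν. -/
namespace RibbonSupport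

theorem choose_e (l m r o : ℕ) (f : Prop) (ν N A p : ℕ → ℕ)
    (hm : 2 ≤ m) (ho : o ≤ 1)
    (hN : ∀ i, N i = ν i + N (i + 1)) (hanti : ∀ i, ν (i + 1) ≤ ν i)
    (hr : ∀ i, i < r → 1 ≤ ν i) (hr0 : ∀ i, r ≤ i → ν i = 0)
    (hN0 : ∀ i, r ≤ i → N i = 0) (hrl : r ≤ l + 1)
    (hD : ∀ i, i ≤ l → N i ≤ A i + m) (hD0 : N 0 = A 0 + m)
    (hS : ∀ i, i < l → ν i + p i + o ≤ A i + m)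
    (hA1 : ∀ i, i < l → A (i + 1) + m ≤ A i) (hAl : A l = 0)
    (hA2 : ∀ i, i < l → m + 2 * (l - i) ≤ A i + 2)
    (hν0 : m ≤ ν 0)
    (hp : ∀ i, i < l → p i + i + 1 ≤ l)
    (hp2 : ∀ i j, i ≤ j → j < l → p i ≤ p j + (j - i))
    (hf : f → 2 ≤ r ∧ ν (r - 1) < ν (r - 2) ∧ ν (r - 1) + 1 ≤ A (r - 1) + m ∧
      (r - 1 < l → ν (r - 1) + p (r - 1) + o + 1 ≤ A (r - 1) + m)) :
    ∃ e : ℕ → ℕ, e 0 = m ∧ (∀ i, e (i + 1) ≤ e i) ∧ (∀ i, e i + ν (i + 1) ≤ e (i + 1) + ν i) ∧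
      (∀ i, e i ≤ ν i) ∧ (∀ i, i ≤ l → N i ≤ e i + A i) ∧
      (∀ i, i < l → ν i + e (i + 1) + p i ≤ A i + e i) ∧
      (o = 1 → 1 ≤ e (r - 1) ∧ (e (r - 1) < ν (r - 1) →
        ν (r - 1) + p (r - 1) + 1 ≤ A (r - 1) + e (r - 1))) ∧
      (f → e (r - 1) < m) := by
  have hNd : ∀ j i, i + j ≤ r → N (i + j) + j ≤ N i := by
    intro j
    induction j with
    | zero => intro i _; simp
    | succ j ih =>
      intro i hi
      have h1 := ih i (by omega)
      have h2 := hN (i + j)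
      have h3 := hr (i + j) (by omega)
      rw [show i + (j + 1) = i + j + 1 by omega]
      omega
  have hNd' : ∀ i j, i ≤ j → j ≤ r → N j + (j - i) ≤ N i := by
    intro i j h1 h2
    have := hNd (j - i) i (by omega)
    rwa [Nat.add_sub_cancel' h1] at this
  -- existence of a row is guaranteed
  have hr1 : 1 ≤ r := by
    by_contra h
    have := hr0 0 (by omega)
    omega
  -- uniqueness of tight rows
  have huniq : ∀ i j, i < j → j < r → j < l → A i < ν i + p i → ν j + p j ≤ A j := by
    intro i j hij hjr hjl ht
    have h1 := hNd' (i + 1) j (by omega) (by omega)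
    have h2 := hN i
    have h3 := hN j
    have h4 := hD i (by omega)
    have h5 := hA2 j hjl
    have h6 := hp j hjl
    have h7 := hp2 i j (by omega) hjl
    have h8 := hS i (by omega)
    omega
  -- a tight row has enough room
  have hroom : ∀ i, i + 1 < r → A i < ν i + p i → ν (i + 1) + (ν i + p i - A i) ≤ ν i := by
    intro i hi ht
    have h2 := hN i
    have h3 := hN (i + 1)
    have h4 := hD i (by omega)
    have h5 := hA2 i (by omega)
    have h6 := hp i (by omega)
    have h8 := hS i (by omega)
    omega
  -- the dichotomy
  have key : ∃ t C, C ≤ m ∧ (ν (t + 1) ≤ C ∨ m + ν (t + 1) ≤ C + ν t) ∧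
      (∀ i, i ≤ l → t < i → C < ν i → N i ≤ C + A i) ∧
      (∀ i, i + 1 < r → A i < ν i + p i → 
        (i ≤ t ∧ ν (i + 1) + m ≤ A i + m + m - p i - ν i) ∨ (i = t ∧ C = A i + m - p i - ν i)) ∧
      (t < r - 1 ∨ C = m) ∧ (o = 1 → 1 ≤ C ∧ (r - 1 < l → C < ν (r - 1) →
        ν (r - 1) + p (r - 1) + 1 ≤ A (r - 1) + C)) ∧ 
        (r - 1 < l → C < ν (r - 1) → ν (r - 1) + p (r - 1) ≤ A (r - 1) + C) ∧ 
        (f → ν (r - 1) < m ∨ C < m) ∧ t ≤ r - 1 := by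
    by_cases hc : ∃ i, i + 1 < r ∧ A i < ν i + p i ∧ A i + m - p i - ν i < ν (i + 1)
    · obtain ⟨t, ht1, ht2, ht3⟩ := hc
      have h8 := hS t (by omega)
      have h9 := hroom t ht1 ht2
      refine ⟨t, A t + m - p t - ν t, by omega, Or.inr (by omega), ?_, ?_, Or.inl (by omega), ?_, 
        ?_, fun _ => Or.inr (by omega), by omega⟩
      · intro i hi hti hC
        have hir : i ≤ r := by
          by_contra h
          have := hr0 i (by omega)
          omega
        have h1 := hNd' (t + 1) i (by omega) hir
        have h2 := hN t
        have h4 := hD t (by omega)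
        have h6 := hp t (by omega)
        by_cases hil : i < l
        · have h5 := hA2 i (by omega)
          omega
        · have : i = l := by omega
          subst this
          omega
      · intro i hi1 hi2
        right
        rcases lt_trichotomy i t with h | h | h
        · have := huniq i t h (by omega) (by omega) hi2
          omega
        · subst h; exact ⟨rfl, rfl⟩
        · have := huniq t i h (by omega) (by omega) ht2
          omega
      · intro ho1
        refine ⟨by omega, fun hrl' _ => ?_⟩
        have := huniq t (r - 1) (by omega) (by omega) hrl' ht2
        omega
      · intro hrl' _
        have := huniq t (r - 1) (by omega) (by omega) hrl' ht2
        omega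
    · push Not at hc
      by_cases hff : f
      · obtain ⟨f1, f2, f3, f4⟩ := hf hff
        have e1 : r - 2 + 1 = r - 1 := by omega
        refine ⟨r - 2, m - 1, by omega, Or.inr (by rw [e1]; omega), ?_, ?_, Or.inl (by omega), ?_, 
          ?_, fun _ => Or.inr (by omega), by omega⟩
        · intro i hi hti hC
          have : i < r := by
            by_contra h
            have := hr0 i (by omega)
            omega
          have : i = r - 1 := by omega
          subst this
          have h1 := hN (r - 1)
          have h2 := hN0 (r - 1 + 1) (by omega)
          omega
        · intro i hi1 hi2
          left
          have := hc i hi1 hi2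
          have h8 := hS i (by omega)
          omega
        · intro ho1
          refine ⟨by omega, fun h _ => ?_⟩
          have := f4 h
          omega
        · intro h _
          have := f4 h
          omega
      · refine ⟨r - 1, m, le_rfl, Or.inl ?_, ?_, ?_, Or.inr rfl, ?_, ?_, fun h => absurd h hff, le_rfl⟩
        · rw [hr0 _ (by omega)]; omega
        · intro i hi _ _
          have := hD i hi
          omega
        · intro i hi1 hi2
          left
          have := hc i hi1 hi2
          have h8 := hS i (by omega)
          omega
        · intro ho1
          refine ⟨by omega, fun h _ => ?_⟩
          have := hS (r - 1) h
          omega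
        · intro h _
          have := hS (r - 1) h
          omega
  obtain ⟨t, C, k1, k2, k3, k4, k5, k6, k7, k8, k9⟩ := key
  have hA1' : ∀ i, i ≤ l → N (i + 1) ≤ A i := by
    intro i hi
    by_cases h : i < l
    · have := hA1 i h
      have := hD (i + 1) (by omega)
      omega
    · rw [hN0 (i + 1) (by omega)]; omega
  let e : ℕ → ℕ := fun i => if i ≤ t then min (ν i) m else min (ν i) C
  have he1 : ∀ i, i ≤ t → e i = min (ν i) m := fun i h => by simp [e, h]
  have he2 : ∀ i, t < i → e i = min (ν i) C := fun i h => by simp [e, Nat.not_le.2 h]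
  have her : e (r - 1) = min (ν (r - 1)) C := by
    rcases k5 with h | h
    · exact he2 _ h
    · rcases Nat.lt_or_ge t (r - 1) with h' | h'
      · exact he2 _ h'
      · rw [he1 _ h', h]
  have hmono : ∀ i, e (i + 1) ≤ e i := by
    intro i
    have := hanti i
    rcases lt_trichotomy i t with h | h | h
    · rw [he1 i (by omega), he1 (i + 1) (by omega)]; omega
    · rw [he1 i (by omega), he2 (i + 1) (by omega)]; omega
    · rw [he2 i (by omega), he2 (i + 1) (by omega)]; omega
  have her1 : ∀ i, r ≤ i → e i = 0 := by
    intro i hi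
    have := hr0 i hi
    by_cases h : i ≤ t
    · rw [he1 i h]; omega
    · rw [he2 i (by omega)]; omega
  refine ⟨e, ?_, hmono, ?_, ?_, ?_, ?_, ?_, ?_⟩
  · rw [he1 0 (by omega)]; omega
  · intro i
    have := hanti i
    rcases lt_trichotomy i t with h | h | h
    · rw [he1 i (by omega), he1 (i + 1) (by omega)]; omega
    · subst h
      rw [he1 i (by omega), he2 (i + 1) (by omega)]; omega
    · rw [he2 i (by omega), he2 (i + 1) (by omega)]; omega
  · intro i
    by_cases h : i ≤ t
    · rw [he1 i h]; omega
    · rw [he2 i (by omega)]; omega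
  · intro i hi
    have h1 := hA1' i hi
    have h2 := hN i
    have h3 := hD i hi
    by_cases h : i ≤ t
    · rw [he1 i h]; omega
    · rw [he2 i (by omega)]
      have := k3 i hi (by omega)
      omega
  · intro i hi
    have hmi := hmono i
    by_cases ht : A i < ν i + p i
    · by_cases hir : i + 1 < r
      · have h9 := hroom i hir ht
        have h8 := hS i hi
        rcases k4 i hir ht with ⟨h1, h2⟩ | ⟨h1, h2⟩
        · have : e (i + 1) ≤ ν (i + 1) := by
            by_cases h : i + 1 ≤ t
            · rw [he1 _ h]; omega
            · rw [he2 _ (by omega)]; omega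
          rw [he1 i h1]
          omega
        · have : e (i + 1) ≤ C := by
            rw [he2 _ (by omega)]; omega
          have h3 : e (i + 1) ≤ ν (i + 1) := by
            rw [he2 _ (by omega)]; omega
          rw [he1 i (by omega)]
          omega
      · have h0 := her1 (i + 1) (by omega)
        rcases Nat.lt_or_ge i r with h | h
        · have : i = r - 1 := by omega
          subst this
          have h1 := k7 hi
          have h2 := hp (r - 1) hi
          have h3 := hA2 (r - 1) hi
          rw [her, h0]
          omega
        · have h1 := hr0 i h
          have h2 := hp i hi
          have h3 := hA2 i hi
          omega
    · omega
  · intro ho1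
    obtain ⟨h1, h2⟩ := k6 ho1
    have h3 := hr (r - 1) (by omega)
    refine ⟨by rw [her]; omega, fun h4 => ?_⟩
    rw [her] at h4 ⊢
    have h5 : r - 1 < l := by
      by_contra h
      have : r - 1 = l := by omega
      have h6 := k3 l le_rfl
      have h7 := hN l
      have h8 := hD l le_rfl
      rw [this] at h4
      rcases k5 with h9 | h9
      · have := h6 (by omega) (by omega)
        omega
      · omega
    have := h2 h5 (by omega)
    omega
  · intro hff
    rw [her]
    have := k8 hff
    omega

/-- Weakly decreasing word with `d i` letters `i + 1` for `i < n`. -/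
def blk (d : ℕ → ℕ) : ℕ → List ℕ
  | 0 => []
  | n + 1 => List.replicate (d n) (n + 1) ++ blk d n

theorem blk_mem (d : ℕ → ℕ) : ∀ n x, x ∈ blk d n → 1 ≤ x ∧ x ≤ n
  | 0, x, h => by simp [blk] at h
  | n + 1, x, h => by
    simp only [blk, List.mem_append, List.mem_replicate] at h
    rcases h with h | h
    · omega
    · have := blk_mem d n x h
      omega

theorem blk_count (d : ℕ → ℕ) : ∀ n j, (blk d n).count (j + 1) = if j < n then d j else 0
  | 0, j => by simp [blk]
  | n + 1, j => by
    simp only [blk, List.count_append, List.count_replicate, blk_count d n j]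
    rcases lt_trichotomy j n with h | h | h
    · have h1 : ¬ n = j := by omega
      have h3 : j < n + 1 := by omega
      simp [h, h1, h3]
    · subst h; simp
    · have h1 : ¬ n = j := by omega
      have h2 : ¬ j < n := by omega
      have h3 : ¬ j < n + 1 := by omega
      simp [h1, h2, h3]

theorem blk_count_zero (d : ℕ → ℕ) (n : ℕ) : (blk d n).count 0 = 0 := by
  rw [List.count_eq_zero]
  intro h
  have := blk_mem d n 0 h
  omega

theorem blk_length (d e : ℕ → ℕ) (he : ∀ i, e i = d i + e (i + 1)) :
    ∀ n, (blk d n).length + e n = e 0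
  | 0 => by simp [blk]
  | n + 1 => by
    have h1 := blk_length d e he n
    have h2 := he n
    simp only [blk, List.length_append, List.length_replicate]
    omega

theorem blk_pairwise (d : ℕ → ℕ) : ∀ n, (blk d n).Pairwise (· ≥ ·)
  | 0 => by simp [blk]
  | n + 1 => by
    simp only [blk, List.pairwise_append]
    refine ⟨?_, blk_pairwise d n, ?_⟩
    · rw [List.pairwise_replicate]; right; exact le_rfl
    · intro x hx y hy
      have := blk_mem d n y hy
      have := List.eq_of_mem_replicate hx
      omega

theorem getD_mem' (w : List ℕ) (i : ℕ) (h : i < w.length) : w.getD i 0 ∈ w := by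
  rw [List.getD_eq_getElem _ _ h]; exact List.getElem_mem h

theorem blk_first (d : ℕ → ℕ) (n : ℕ) (h : 1 ≤ d n) : (blk d (n + 1)).getD 0 0 = n + 1 := by
  obtain ⟨c, hc⟩ : ∃ c, d n = c + 1 := ⟨d n - 1, by omega⟩
  simp [blk, hc, List.replicate_succ]

theorem blk_last (d : ℕ → ℕ) (n : ℕ) (h : d n < (blk d (n + 1)).length) :
    (blk d (n + 1)).getD ((blk d (n + 1)).length - 1) 0 < n + 1 := by
  have h0 : (blk d (n + 1)).length = d n + (blk d n).length := by simp [blk]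
  rw [h0] at h ⊢
  simp only [blk]
  rw [List.getD_append_right _ _ _ _ (by simp; omega)]
  have := blk_mem d n _ (getD_mem' (blk d n) (d n + (blk d n).length - 1 -
    (List.replicate (d n) (n + 1)).length) (by simp; omega))
  omega

open Finset in
theorem main_induction (α : ℕ → ℕ) (ov : ℕ → Bool) : ∀ l : ℕ, (∀ i, i < l → 2 ≤ α i) →
    (∀ i j, i ≤ j → j < l → α j ≤ α i) → ∀ (ν N : ℕ → ℕ) (r : ℕ) (f : Prop),
    (∀ i, N i = ν i + N (i + 1)) → (∀ i, ν (i + 1) ≤ ν i) →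
    (∀ i, i < r → 1 ≤ ν i) → (∀ i, r ≤ i → ν i = 0) →
    (∀ i, r ≤ i → N i = 0) → r ≤ l → (∀ i, i ≤ l → N i ≤ ∑ j ∈ Ico i l, α j) →
    N 0 = ∑ j ∈ Ico 0 l, α j →
    (∀ i, i < l → ν i + (∑ j ∈ Ico i (l - 1), (ov j).toNat) ≤ ∑ j ∈ Ico i l, α j) →
    (f → 2 ≤ r ∧ ν (r - 1) < ν (r - 2) ∧
      ν (r - 1) + (∑ j ∈ Ico (r - 1) (l - 1), (ov j).toNat) + 1 ≤ ∑ j ∈ Ico (r - 1) l, α j) →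
    ∃ w : List ℕ, w.length = ∑ j ∈ range l, α j ∧
      (∀ i j, i < l → j + 1 < α i →
        w.getD ((∑ q ∈ range i, α q) + j + 1) 0 ≤ w.getD ((∑ q ∈ range i, α q) + j) 0) ∧
      (∀ i, i + 1 < l → ov i = true →
        w.getD ((∑ q ∈ range (i + 1), α q) - 1) 0 < w.getD (∑ q ∈ range (i + 1), α q) 0) ∧
      IsYam w ∧ (∀ j, w.count (j + 1) = ν j) ∧ w.count 0 = 0 ∧
      (f → w.getD (w.length - 1) 0 < r) := by
  intro l
  induction l with
  | zero =>
    intro _ _ ν N r f _ _ hr hr0 _ hrl _ _ _ hf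
    refine ⟨[], by simp, by simp, by simp, by intro k j; simp, ?_, by simp, ?_⟩
    · intro j; simp [hr0 j (by omega)]
    · intro h; have := (hf h).1; omega
  | succ l ih =>
    intro hα2 hαm ν N r f hN hanti hr hr0 hN0 hrl hD hD0 hS hf
    set A : ℕ → ℕ := fun i => ∑ j ∈ Ico i l, α j with hA
    set p : ℕ → ℕ := fun i => ∑ j ∈ Ico i (l - 1), (ov j).toNat with hp
    set o : ℕ := if 1 ≤ l then (ov (l - 1)).toNat else 0 with ho
    have hAs : ∀ i, i ≤ l → ∑ j ∈ Ico i (l + 1), α j = A i + α l := fun i hi =>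
      Finset.sum_Ico_succ_top hi α
    have hps : ∀ i, i < l → ∑ j ∈ Ico i (l + 1 - 1), (ov j).toNat = p i + o := by
      intro i hi
      obtain ⟨l', rfl⟩ : ∃ l', l = l' + 1 := ⟨l - 1, by omega⟩
      simp only [hp, ho, Nat.add_sub_cancel]
      rw [Finset.sum_Ico_succ_top (by omega)]
      simp
    have ho1 : o ≤ 1 := by
      simp only [ho]
      split
      · exact Bool.toNat_le _
      · omega
    have hAstep : ∀ i, i < l → A i = α i + A (i + 1) := fun i hi =>
      Finset.sum_eq_sum_Ico_succ_bot hi α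
    have hAl : A l = 0 := by simp [hA]
    have hA2 : ∀ k i, i < l → l - i = k + 1 → α l + 2 * (l - i) ≤ A i + 2 := by
      intro k
      induction k with
      | zero =>
        intro i hi hk
        have h1 := hAstep i hi
        have h2 := hαm i l (by omega) (by omega)
        omega
      | succ k ihk =>
        intro i hi hk
        have h1 := hAstep i hi
        have h2 := hα2 i (by omega)
        have h3 := ihk (i + 1) (by omega) (by omega)
        omega
    have hpstep : ∀ i, i + 1 < l → p i ≤ 1 + p (i + 1) := by
      intro i hi
      simp only [hp]
      rw [Finset.sum_eq_sum_Ico_succ_bot (by omega)]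
      have := Bool.toNat_le (ov i)
      omega
    have hp2 : ∀ k i, i + k < l → p i ≤ p (i + k) + k := by
      intro k
      induction k with
      | zero => intro i _; simp
      | succ k ihk =>
        intro i hi
        have h1 := ihk i (by omega)
        have h2 := hpstep (i + k) (by omega)
        rw [show i + (k + 1) = i + k + 1 by omega]
        omega
    have hpl : p (l - 1) = 0 := by simp [hp]
    have hp2' : ∀ i j, i ≤ j → j < l → p i ≤ p j + (j - i) := by
      intro i j hij hj
      have := hp2 (j - i) i (by omega)
      rwa [Nat.add_sub_cancel' hij] at this
    have hm2 := hα2 l (by omega)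
    have hν0 : α l ≤ ν 0 := by
      have h1 := hN 0
      have h2 := hD 1 (by omega)
      have h3 := Finset.sum_eq_sum_Ico_succ_bot (show 0 < l + 1 by omega) α
      have h4 := hαm 0 l (by omega) (by omega)
      simp only [zero_add] at h1 h3
      omega
    have hr1 : 1 ≤ r := by
      by_contra h
      have := hr0 0 (by omega)
      omega
    obtain ⟨e, e0, e1, e2, e3, e4, e5, e6, e7⟩ := choose_e l (α l) r o f ν N A p hm2 ho1 hN hanti
      hr hr0 hN0 hrl (fun i hi => by rw [← hAs i hi]; exact hD i (by omega))
      (by rw [← hAs 0 (by omega)]; exact hD0)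
      (fun i hi => by
        have := hS i (by omega)
        rw [hps i hi, hAs i (by omega)] at this
        omega)
      (fun i hi => by
        have := hAstep i hi
        have := hαm i l (by omega) (by omega)
        omega) hAl (fun i hi => hA2 (l - i - 1) i hi (by omega)) hν0
      (fun i hi => by
        have := hp2' i (l - 1) (by omega) (by omega)
        omega) hp2'
      (fun h => by
        obtain ⟨h1, h2, h3⟩ := hf h
        rw [hAs (r - 1) (by omega)] at h3
        refine ⟨h1, h2, by omega, fun h4 => ?_⟩
        rw [hps (r - 1) h4] at h3
        omega)
    have eN : ∀ i, e i ≤ N i := fun i => by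
      have := e3 i
      have := hN i
      omega
    have er : ∀ i, r ≤ i → e i = 0 := fun i hi => by
      have := e3 i
      have := hr0 i hi
      omega
    obtain ⟨r', hr'1, hr'2⟩ : ∃ r', (e (r - 1) = ν (r - 1) → r' = r - 1) ∧
        (e (r - 1) < ν (r - 1) → r' = r) := by
      by_cases h : e (r - 1) = ν (r - 1)
      · exact ⟨r - 1, fun _ => rfl, fun h' => by omega⟩
      · exact ⟨r, fun h' => absurd h' h, fun _ => rfl⟩
    have er3 := e3 (r - 1)
    have hrr : e r = 0 := er r le_rfl
    have hrs : r - 1 + 1 = r := by omega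
    have hr'c : r' = r - 1 ∨ r' = r := by
      rcases Nat.lt_or_ge (e (r - 1)) (ν (r - 1)) with h | h
      · right; exact hr'2 h
      · left; exact hr'1 (by omega)
    have hr'l : r' ≤ l := by
      by_contra h
      have h1 : r = l + 1 := by omega
      have h2 : r' = r := by omega
      have h3 : ¬ e (r - 1) = ν (r - 1) := fun h => by have := hr'1 h; omega
      have h4 := e4 l le_rfl
      have h5 := hN l
      have h6 : r - 1 = l := by omega
      rw [h6] at h3
      have h7 := e3 l
      omega
    obtain ⟨w, w1, w2, w3, w4, w5, w6, w7⟩ := ih (fun i hi => hα2 i (by omega))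
      (fun i j hij hj => hαm i j hij (by omega))
      (fun i => ν i + e (i + 1) - e i) (fun i => N i - e i) r' (o = 1 ∧ r' = r)
      (by
        intro i
        have h1 := hN i
        have h2 := e3 i
        have h3 := eN (i + 1)
        omega)
      (by
        intro i
        have h1 := e2 i
        have h2 := e2 (i + 1)
        have h3 := e1 (i + 1)
        have h4 := e3 i
        have h5 := e3 (i + 1)
        omega)
      (by
        intro i hi
        have h1 := e2 i
        rcases Nat.lt_or_ge (i + 1) r with h | h
        · have h2 := hr (i + 1) h
          have h4 := e3 i
          omega
        · have h2 : r' = r := by omega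
          have h3 : ¬ e (r - 1) = ν (r - 1) := fun h => by have := hr'1 h; omega
          have h4 : i = r - 1 := by omega
          subst h4
          omega)
      (by
        intro i hi
        have h5 := e3 i
        have h6 := er (i + 1)
        rcases Nat.lt_or_ge i r with h | h
        · have h4 : i = r - 1 := by omega
          subst h4
          have h3 : ¬ e (r - 1) < ν (r - 1) := fun h => by have := hr'2 h; omega
          omega
        · have := hr0 i h
          have := e1 i
          omega)
      (by
        intro i hi
        have h5 := e3 i
        rcases Nat.lt_or_ge i r with h | h
        · have h4 : i = r - 1 := by omega
          subst h4
          have h3 : ¬ e (r - 1) < ν (r - 1) := fun h => by have := hr'2 h; omega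
          have h6 := hN (r - 1)
          have h7 := hN0 (r - 1 + 1) (by omega)
          omega
        · have := hN0 i h
          omega)
      hr'l
      (by
        intro i hi
        have h1 := e4 i hi
        simp only [hA] at h1 ⊢
        omega)
      (by
        have h1 := hAs 0 (by omega)
        simp only [hA] at h1 ⊢
        omega)
      (by
        intro i hi
        have h1 := e5 i hi
        have h2 := e3 i
        simp only [hA, hp] at h1 ⊢
        omega)
      (by
        rintro ⟨h1, h2⟩
        have h3 : e (r - 1) < ν (r - 1) := by
          by_contra h
          have := hr'1 (by omega)
          omega
        obtain ⟨h4, h5⟩ := e6 h1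
        have h5 := h5 h3
        have hr2 : 2 ≤ r := by
          by_contra h
          have h6 : r = 1 := by omega
          subst h6
          have h7 := hN 0
          have h8 := hN0 1 le_rfl
          have h9 := hAs 0 (by omega)
          simp only [zero_add] at h7
          simp only [Nat.sub_self] at h5
          omega
        have h6 := e2 (r - 2)
        have h7 : r - 2 + 1 = r - 1 := by omega
        have h8 := e3 (r - 2)
        rw [h7] at h6
        subst h2
        refine ⟨hr2, ?_, ?_⟩
        · simp only [hrs, h7, hrr]
          omega
        · simp only [hrs, hrr]
          simp only [hA, hp] at h5
          omega)
    set d : ℕ → ℕ := fun i => e i - e (i + 1) with hd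
    have hde : ∀ i, e i = d i + e (i + 1) := fun i => by
      have := e1 i
      simp only [hd]; omega
    have hbl : (blk d r).length = α l := by
      have := blk_length d e hde r
      omega
    have hdr : d (r - 1) = e (r - 1) := by
      have := hde (r - 1)
      rw [hrs] at this
      omega
    have hcount : ∀ j, (w ++ blk d r).count (j + 1) = ν j := by
      intro j
      rw [List.count_append, w5, blk_count]
      have h1 := hde j
      have h2 := e3 j
      split
      · omega
      · have := er j (by omega)
        omega
    refine ⟨w ++ blk d r, ?_, ?_, ?_, ?_, hcount, ?_, ?_⟩
    · rw [List.length_append, w1, hbl, Finset.sum_range_succ]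
    · intro i j hi hj
      rcases Nat.lt_or_ge i l with h | h
      · have h1 : (∑ q ∈ range (i + 1), α q) ≤ ∑ q ∈ range l, α q :=
          Finset.sum_le_sum_of_subset (Finset.range_mono (by omega))
        rw [Finset.sum_range_succ] at h1
        rw [List.getD_append _ _ _ _ (by omega), List.getD_append _ _ _ _ (by omega)]
        exact w2 i j h hj
      · have h1 : i = l := by omega
        subst h1
        rw [List.getD_append_right _ _ _ _ (by omega), List.getD_append_right _ _ _ _ (by omega)]
        rw [w1]
        rw [show (∑ q ∈ range i, α q) + j + 1 - (∑ q ∈ range i, α q) = j + 1 by omega,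
          show (∑ q ∈ range i, α q) + j - (∑ q ∈ range i, α q) = j by omega]
        rw [List.getD_eq_getElem _ _ (by omega), List.getD_eq_getElem _ _ (by omega)]
        exact List.pairwise_iff_getElem.1 (blk_pairwise d r) j (j + 1) (by omega) (by omega)
          (by omega)
    · intro i hi hov
      have hpos : 0 < ∑ q ∈ range (i + 1), α q := by
        rw [Finset.sum_range_succ]
        have := hα2 i (by omega)
        omega
      rcases Nat.lt_or_ge (i + 1) l with h | h
      · have h1 : (∑ q ∈ range (i + 1 + 1), α q) ≤ ∑ q ∈ range l, α q :=
          Finset.sum_le_sum_of_subset (Finset.range_mono (by omega))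
        rw [Finset.sum_range_succ] at h1
        have h2 := hα2 (i + 1) (by omega)
        rw [List.getD_append _ _ _ _ (by omega), List.getD_append _ _ _ _ (by omega)]
        exact w3 i h hov
      · have h1 : l = i + 1 := by omega
        have ho1 : o = 1 := by simp [ho, h1, hov]
        obtain ⟨h2, h3⟩ := e6 ho1
        rw [h1] at w1
        rw [List.getD_append _ _ _ _ (by omega), List.getD_append_right _ _ _ _ (by omega), ← w1,
          Nat.sub_self]
        have h4 := blk_first d (r - 1) (by omega)
        rw [hrs] at h4
        rw [h4]
        rcases hr'c with h5 | h5
        · have hmem := getD_mem' w (w.length - 1) (by omega)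
          generalize w.getD (w.length - 1) 0 = x at hmem ⊢
          by_contra hx
          obtain ⟨y, rfl⟩ : ∃ y, x = y + 1 := ⟨x - 1, by omega⟩
          have h6 := List.count_pos_iff.2 hmem
          rw [w5] at h6
          have h7 := hr0 y
          have h8 := er (y + 1) (by omega)
          have h9 : ¬ e (r - 1) < ν (r - 1) := fun h => by have := hr'2 h; omega
          have h10 := e3 y
          rcases Nat.lt_or_ge y r with h11 | h11
          · have h12 : y = r - 1 := by omega
            subst h12
            omega
          · have := h7 h11
            omega
        · have := w7 ⟨ho1, h5⟩
          omega
    · intro k j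
      rcases Nat.lt_or_ge k w.length with h | h
      · rw [List.take_append_of_le_length (by omega)]
        exact w4 k j
      · have h1 : ((w ++ blk d r).take k).count (j + 2) ≤ ν (j + 1) := by
          rw [← hcount (j + 1)]
          exact (List.take_sublist k _).count_le _
        have h2 : ν j + e (j + 1) - e j ≤ ((w ++ blk d r).take k).count (j + 1) := by
          rw [← w5 j, List.take_append, List.take_of_length_le h, List.count_append]
          omega
        have h3 := e2 j
        omega
    · rw [List.count_append, w6, blk_count_zero]
    · intro h
      have h1 := e7 h
      have h2 := blk_last d (r - 1) (by rw [hrs]; omega)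
      rw [hrs] at h2
      rw [List.length_append, List.getD_append_right _ _ _ _ (by omega)]
      rw [show w.length + (blk d r).length - 1 - w.length = (blk d r).length - 1 by omega]
      exact h2

theorem take_sum' (a : List ℕ) : ∀ i, (a.take i).sum = ∑ j ∈ Finset.range i, a.getD j 0 := by
  intro i
  induction i with
  | zero => simp
  | succ i ih =>
    rw [Finset.sum_range_succ, ← ih]
    by_cases h : i < a.length
    · rw [List.sum_take_succ _ _ h, List.getD_eq_getElem _ _ h]
    · rw [List.take_of_length_le (by omega), List.take_of_length_le (by omega),
        List.getD_eq_default _ _ (by omega)]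
      simp

theorem drop_sum_step (a : List ℕ) (i : ℕ) : (a.drop i).sum = a.getD i 0 + (a.drop (i + 1)).sum := by
  by_cases h : i < a.length
  · rw [List.drop_eq_getElem_cons h, List.sum_cons, List.getD_eq_getElem _ _ h]
  · rw [List.drop_of_length_le (by omega), List.drop_of_length_le (by omega),
      List.getD_eq_default _ _ (by omega)]
    simp

theorem drop_sum' (a : List ℕ) : ∀ i, i ≤ a.length →
    (a.drop i).sum = ∑ j ∈ Finset.Ico i a.length, a.getD j 0 := by
  intro i hi
  have h1 := List.sum_take_add_sum_drop a i
  have h2 := take_sum' a i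
  have h3 := take_sum' a a.length
  have h4 := Finset.sum_range_add_sum_Ico (fun j => a.getD j 0) hi
  rw [List.take_length] at h3
  omega

/-- Theorem `ThmSuf`: let `a` be a partition with parts ≥ 2 and overlapping
partition `p`, and let `nu ∈ [a, (|a|−p₁, p₁)]` be a partition with `ℓ(nu) = ℓ(a) − k` for
some `1 ≤ k ≤ ℓ(a)−2`, satisfying `ν_i ≤ Σ_{j=i}^{ℓ(a)} a_j − p_i` for all `1 ≤ i ≤ ℓ(a)`.
Then `c_{R_a^p}^{nu} > 0`. -/
theorem sufficiency_for_positivity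
    (a p nu : List ℕ) (ha : IsPartition a) (h2 : PartsGE a 2)
    (hp : IsOverlapSeq a p) (hnu : IsPartition nu) (k : ℕ)
    (hk1 : 1 ≤ k) (hk2 : k ≤ a.length - 2) (hlen : nu.length = a.length - k)
    (hint : InInterval a p nu)
    (hineq : ∀ i, i < a.length → nu.getD i 0 + p.getD i 0 ≤ (a.drop i).sum) :
    InSupport a p nu := by
  obtain ⟨hp1, hp2, hp3⟩ := hp
  obtain ⟨⟨hd1, hd2⟩, -⟩ := hint
  have hlpos : 1 ≤ a.length := by omega
  have hgp : ∀ (b : List ℕ), b.Pairwise (· ≥ ·) → ∀ i j, i ≤ j → b.getD j 0 ≤ b.getD i 0 := by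
    intro b hb i j hij
    by_cases h : j < b.length
    · rw [List.getD_eq_getElem _ _ h, List.getD_eq_getElem _ _ (by omega)]
      rcases Nat.eq_or_lt_of_le hij with h' | h'
      · subst h'; exact le_rfl
      · exact List.pairwise_iff_getElem.1 hb i j (by omega) h h'
    · rw [List.getD_eq_default _ _ (by omega)]; omega
  have hpsum : ∀ k i, i + k = a.length - 1 →
      p.getD i 0 = ∑ j ∈ Finset.Ico i (a.length - 1), (ovOf p j).toNat := by
    intro k
    induction k with
    | zero => intro i hi; simp only [Nat.add_zero] at hi; subst hi; rw [hp2]; simp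
    | succ k ih =>
      intro i hi
      rw [Finset.sum_eq_sum_Ico_succ_bot (by omega), ← ih (i + 1) (by omega)]
      rcases hp3 i (by omega) with h | h
      · have : ovOf p i = false := by simp only [ovOf, decide_eq_false_iff_not]; omega
        rw [this, h]; simp
      · have : ovOf p i = true := by simp only [ovOf, decide_eq_true_eq]; omega
        rw [this, h]; simp; omega
  have hnus : ∀ i, (nu.drop i).sum ≤ (a.drop i).sum := by
    intro i
    have h1 := List.sum_take_add_sum_drop a i
    have h2 := List.sum_take_add_sum_drop nu i
    have h3 := hd2 i
    omega
  obtain ⟨w, w1, w2, w3, w4, w5, w6, -⟩ := main_induction (fun i => a.getD i 0) (ovOf p) a.length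
    (fun i hi => h2 _ (getD_mem' a i hi)) (fun i j hij _ => hgp a ha.1 i j hij)
    (fun i => nu.getD i 0) (fun i => (nu.drop i).sum) nu.length False
    (fun i => drop_sum_step nu i) (fun i => hgp nu hnu.1 i (i + 1) (by omega))
    (fun i hi => hnu.2 _ (getD_mem' nu i hi)) (fun i hi => List.getD_eq_default _ _ hi)
    (fun i hi => by simp [List.drop_of_length_le hi]) (by omega)
    (fun i hi => by rw [← drop_sum' a i hi]; exact hnus i)
    (by rw [← drop_sum' a 0 (by omega)]; simpa using hd1.symm)
    (fun i hi => by
      rw [← drop_sum' a i (by omega), ← hpsum (a.length - 1 - i) i (by omega)]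
      exact hineq i hi)
    (fun h => h.elim)
  refine ⟨w, ⟨?_, ?_, ?_⟩, w4, w5, w6⟩
  · rw [w1, ← take_sum', List.take_length]
  · intro i j hi hj
    have := w2 i j hi hj
    rwa [← take_sum' a i] at this
  · intro i hi hov
    have := w3 i hi hov
    rwa [← take_sum' a (i + 1)] at this

end RibbonSupport
end

section
/- Let α be a partition with all parts at least 2 and overlapping partition p. If ℓ(p) ≤ 1 then [R_α^p] = [α, (|α|−p_1, p_1)]. If ℓ(p) ≥ 2, then for every partition ν ∈ [α, (|α|−p_1, p_1)], ν does not belong to the Schur support [R_α^p] if and only if there exists i ∈ {1,…,ℓ(p)−1} such that ν_{i+1} ≥ ϱ_i = Σ_{q=i+1}^{ℓ(α)} α_q − p_{i+1} + 1; equivalently, ν_{i+1} exceeds the total number of columns of the last ℓ(α)−i rows of R_α^p for some such i. -/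
namespace RibbonSupport

/-- Strip selection: the numeric heart of the construction. -/
theorem strip_exists (A p nu SA SN : ℕ → ℕ) (L b : ℕ) (f : Prop)
    (hSA : ∀ i, SA (i + 1) = SA i + A i)
    (hSN0 : SN 0 = 0) (hSA0 : SA 0 = 0) (hSN : ∀ i, SN (i + 1) = SN i + nu i)
    (hA : ∀ i, i ≤ L → A L ≤ A i) (hm : 2 ≤ A L)
    (hp : ∀ i, i < L → p i = p (i + 1) ∨ p i = p (i + 1) + 1)
    (hnu : ∀ i, nu (i + 1) ≤ nu i) (hb : ∀ i, 0 < nu i ↔ i < b)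
    (hbL : b ≤ L + 1) (htot : SN (L + 1) = SA (L + 1))
    (hD : ∀ j, j ≤ L + 1 → SA j ≤ SN j)
    (hC : ∀ i, i < b → nu i + p i + SA i ≤ SA (L + 1) + p L)
    (hF : f → 2 ≤ b ∧ nu (b - 1) < nu (b - 2) ∧
      nu (b - 1) + p (b - 1) + SA (b - 1) + 1 ≤ SA (L + 1) + p L) :
    ∃ t : ℕ → ℕ, t 0 = A L ∧ (∀ j, t (j + 1) ≤ t j) ∧ (∀ j, t j ≤ nu j) ∧
      (∀ j, nu (j + 1) + t j ≤ nu j + t (j + 1)) ∧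
      (∀ j, j ≤ L → SA j + A L ≤ SN j + t j) ∧
      (p (L - 1) = p L + 1 → 1 ≤ t (b - 1)) ∧
      (∀ j, j + 1 < b → nu j + t (j + 1) + p j + SA j ≤ SA L + p (L - 1) + t j) ∧
      (t (b - 1) < nu (b - 1) →
        nu (b - 1) + p (b - 1) + SA (b - 1) ≤ SA L + p L + t (b - 1)) ∧
      (f → t (b - 1) < A L) := by
  have hSAL := hSA L
  set m := A L with hmdef
  have hanti : Antitone nu := antitone_nat_of_succ_le hnu
  have hSNm : Monotone SN := monotone_nat_of_le_succ (fun i => by rw [hSN]; omega)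
  have hSAm : Monotone SA := monotone_nat_of_le_succ (fun i => by rw [hSA]; omega)
  -- lower bound for tails of `A`
  have sa_lb : ∀ k i, i + k = L + 1 → SA i + m * k ≤ SA (L + 1) := by
    intro k
    induction k with
    | zero => intro i h; simp at h; simp [h]
    | succ k ih =>
      intro i h
      have h1 := ih (i + 1) (by omega)
      have h2 := hA i (by omega)
      have h3 := hSA i
      have h4 : m * (k + 1) = m * k + m := by ring
      omega
  have p_b : ∀ k i, i + k ≤ L → p (i + k) ≤ p i ∧ p i ≤ p (i + k) + k := by
    intro k
    induction k with
    | zero => intro i h; simp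
    | succ k ih =>
      intro i h
      have h1 := ih i (by omega)
      have h2 := hp (i + k) (by omega)
      have : i + (k + 1) = i + k + 1 := by ring
      rw [this]
      omega
  have sn_lb : ∀ k j c, (∀ q, q < j + k → c ≤ nu q) → SN j + k * c ≤ SN (j + k) := by
    intro k
    induction k with
    | zero => intro j c h; simp
    | succ k ih =>
      intro j c h
      have h1 := ih j c (fun q hq => h q (by omega))
      have h2 := h (j + k) (by omega)
      have h3 := hSN (j + k)
      have h4 : (k + 1) * c = k * c + c := by ring
      have : j + (k + 1) = j + k + 1 := by ring
      rw [this]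
      omega
  have hnu0 : m ≤ nu 0 := by
    have h1 := hD 1 (by omega)
    have h2 := hSA 0
    have h3 := hSN 0
    have h4 := hA 0 (by omega)
    simp only [zero_add] at h2 h3
    omega
  have hb1 : 1 ≤ b := by
    have := (hb 0).1 (by omega)
    omega
  have hpL : p L ≤ p (L - 1) ∧ p (L - 1) ≤ p L + 1 := by
    rcases Nat.eq_zero_or_pos L with h | h
    · subst h; simp
    · have h1 := hp (L - 1) (by omega)
      have h2 : L - 1 + 1 = L := by omega
      rw [h2] at h1
      omega
  by_cases hneedy : ∃ i, i + 1 < b ∧ SA (L + 1) + p (L - 1) < nu i + p i + SA i + m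
  · obtain ⟨i, hib, hi⟩ := hneedy
    obtain ⟨k, hk⟩ : ∃ k, L = i + k + 1 := ⟨L - i - 1, by omega⟩
    -- basic bound at a needy row
    have basic : ∀ i k, L = i + k + 1 → SA (L + 1) + p (L - 1) < nu i + p i + SA i + m →
        m * k + m ≤ nu i + k ∧ SA i + m * k + 2 * m ≤ SA (L + 1) ∧ 2 * k ≤ m * k ∧
          p i ≤ p (L - 1) + k ∧ p (L - 1) ≤ p i := by
      intro i k hk hi
      have h1 := sa_lb (k + 2) i (by omega)
      have h2 := p_b k i (by omega)
      have h3 : m * (k + 2) = m * k + 2 * m := by ring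
      have h4 : i + k = L - 1 := by omega
      rw [h4] at h2
      have h5 : 2 * k ≤ m * k := Nat.mul_le_mul_right _ hm
      refine ⟨by omega, by omega, h5, h2.2, h2.1⟩
    obtain ⟨hν, hSAi, hk2, hpi, hpi'⟩ := basic i k hk hi
    have uniq0 : ∀ j i, j < i → i + 1 < b →
        SA (L + 1) + p (L - 1) < nu i + p i + SA i + m →
        SA (L + 1) + p (L - 1) < nu j + p j + SA j + m → False := by
      intro j i hji hib hi hj
      obtain ⟨k, hk⟩ : ∃ k, L = i + k + 1 := ⟨L - i - 1, by omega⟩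
      obtain ⟨x, hx⟩ : ∃ x, i = j + 1 + x := ⟨i - j - 1, by omega⟩
      obtain ⟨hν, hSAi, hk2, hpi, hpi'⟩ := basic i k hk hi
      have h1 := p_b (x + 1) j (by omega)
      have h2 : j + (x + 1) = i := by omega
      rw [h2] at h1
      have h3 := sn_lb (x + 1) (j + 1) (nu i) (fun q hq => hanti (by omega))
      have h4 : j + 1 + (x + 1) = i + 1 := by omega
      rw [h4] at h3
      have h5 := hSN j
      have h6 := hD j (by omega)
      have h7 := hSN (i + 1)
      have h8 : SN (i + 1 + 1) ≤ SN (L + 1) := hSNm (by omega)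
      have h9 := (hb (i + 1)).2 hib
      have h10 : (x + 1) * nu i = x * nu i + nu i := by ring
      have h11 : x * 1 ≤ x * nu i := Nat.mul_le_mul_left _ (by have := (hb i).2 (by omega); omega)
      omega
    have uniq : ∀ j, j + 1 < b → j ≠ i → nu j + p j + SA j + m ≤ SA (L + 1) + p (L - 1) := by
      intro j hjb hji
      by_contra hcon
      rcases lt_or_gt_of_ne hji with h | h
      · exact uniq0 j i h hib hi (by omega)
      · exact uniq0 i j h hjb (by omega) hi
    have hCi := hC i (by omega)
    obtain ⟨T, hT⟩ : ∃ T, T + nu i + p i + SA i = SA (L + 1) + p (L - 1) :=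
      ⟨SA (L + 1) + p (L - 1) - (nu i + p i + SA i), by omega⟩
    have hTm : T < m := by omega
    have hνm : m ≤ nu i := by omega
    have hDi := hD i (by omega)
    have hSNi := hSN i
    have htau : nu (i + 1) + SA i + nu i ≤ SA (L + 1) := by
      have h7 := hSN (i + 1)
      have h8 : SN (i + 1 + 1) ≤ SN (L + 1) := hSNm (by omega)
      omega
    have hrow : ∀ c, i < c → c < b → SA i + nu i + (c - i - 1) ≤ SN c := by
      intro c h1 h2
      have h3 := sn_lb (c - i - 1) (i + 1) 1 (fun q hq => (hb q).2 (by omega))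
      have h4 : i + 1 + (c - i - 1) = c := by omega
      rw [h4] at h3
      omega
    refine ⟨fun j => if j ≤ i then m else min T (nu j), by simp, ?_, ?_, ?_, ?_, ?_, ?_, ?_, ?_⟩
    · intro j
      have := hnu j
      simp only
      split_ifs <;> omega
    · intro j
      simp only
      split_ifs with h
      · have := hanti h; omega
      · omega
    · intro j
      have := hnu j
      simp only
      split_ifs with h1 h2 h2
      · omega
      · have : j = i := by omega
        subst this
        omega
      · omega
      · omega
    · intro j hj
      simp only
      split_ifs with h
      · have := hD j (by omega); omega
      · rcases le_or_gt (nu j) T with h1 | h1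
        · have h2 := hD (j + 1) (by omega)
          have h3 := hSA j
          have h4 := hSN j
          have h5 := hA j hj
          omega
        · have hjb := (hb j).1 (by omega)
          have h2 := hrow j (by omega) hjb
          have h3 := sa_lb (L - j + 1) j (by omega)
          have h4 : m * (L - j + 1) = m * (L - j) + m := by ring
          have h5 : 1 * (L - j) ≤ m * (L - j) := Nat.mul_le_mul_right _ (by omega)
          omega
    · intro ho
      have h1 := (hb (b - 1)).2 (by omega)
      simp only
      rw [if_neg (by omega)]
      omega
    · intro j hj
      rcases eq_or_ne j i with h | h
      · subst h
        simp
        omega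
      · have h1 := uniq j hj h
        have h2 := hnu j
        simp only
        split_ifs <;> omega
    · simp only
      rw [if_neg (by omega)]
      intro hlt
      obtain ⟨c, hc⟩ : ∃ c, b = c + 1 := ⟨b - 1, by omega⟩
      subst hc
      simp only [Nat.add_sub_cancel] at hlt ⊢
      have hTc : T < nu c := by omega
      rw [min_eq_left hTc.le]
      have h1 := hrow c (by omega) (by omega)
      have h2 : SN (c + 1) ≤ SN (L + 1) := hSNm (by omega)
      have h3 := hSN c
      have h4 := p_b (c - i) i (by omega)
      have h5 : i + (c - i) = c := by omega
      rw [h5] at h4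
      have h6 := sa_lb (L - c + 1) c (by omega)
      have h7 : m * (L - c + 1) = m * (L - c) + m := by ring
      have h8 : 2 * (L - c) ≤ m * (L - c) := Nat.mul_le_mul_right _ (by omega)
      rcases eq_or_ne c L with hcL | hcL
      · subst hcL
        omega
      · have h9 := p_b (L - 1 - c) c (by omega)
        have h10 : c + (L - 1 - c) = L - 1 := by omega
        rw [h10] at h9
        omega
    · intro _
      simp only
      rw [if_neg (by omega)]
      omega
  · push Not at hneedy
    by_cases hfm : f ∧ m ≤ nu (b - 1)
    · obtain ⟨hf, hmb⟩ := hfm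
      obtain ⟨hb2, hlt, hFb⟩ := hF hf
      obtain ⟨c, hc⟩ : ∃ c, b = c + 2 := ⟨b - 2, by omega⟩
      subst hc
      have e1 : c + 2 - 1 = c + 1 := by omega
      have e2 : c + 2 - 2 = c := by omega
      rw [e1] at hmb hlt hFb ⊢
      rw [e2] at hlt
      have hSNb : SN (c + 2) = SN (L + 1) := by
        have h0 : ∀ k, SN (c + 2 + k) = SN (c + 2) := by
          intro k
          induction k with
          | zero => rfl
          | succ k ih =>
            have h1 := hSN (c + 2 + k)
            have h2 := mt (hb (c + 2 + k)).1 (by omega)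
            have h3 : c + 2 + (k + 1) = c + 2 + k + 1 := by ring
            rw [h3]; omega
        have h1 := h0 (L + 1 - (c + 2))
        have h2 : c + 2 + (L + 1 - (c + 2)) = L + 1 := by omega
        rw [h2] at h1
        exact h1.symm
      have hSNc : SN (c + 2) = SN (c + 1) + nu (c + 1) := hSN (c + 1)
      have hpc := p_b (L - (c + 1)) (c + 1) (by omega)
      have e3 : c + 1 + (L - (c + 1)) = L := by omega
      rw [e3] at hpc
      refine ⟨fun j => if j ≤ c then m else if j = c + 1 then m - 1 else 0,
        by simp, ?_, ?_, ?_, ?_, ?_, ?_, ?_, ?_⟩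
      · intro j
        simp only
        split_ifs <;> omega
      · intro j
        simp only
        split_ifs with h h'
        · have := hanti h; omega
        · subst h'; omega
        · omega
      · intro j
        have := hnu j
        simp only
        split_ifs with h1 h2 h3 h4 h5 h6
        all_goals try omega
        · have : j = c := by omega
          subst this
          omega
        · have : j = c + 1 := by omega
          subst this
          have h2 := mt (hb (c + 1 + 1)).1 (by omega)
          omega
      · intro j hj
        simp only
        split_ifs with h h'
        · have := hD j (by omega); omega
        · subst h'
          omega
        · have h1 : SN (c + 2) ≤ SN j := hSNm (by omega)
          have h2 : SA (j + 1) ≤ SA (L + 1) := hSAm (by omega)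
          have h3 := hSA j
          have h4 := hA j hj
          omega
      · intro _
        simp
        omega
      · intro j hj
        have := hneedy j hj
        simp only
        split_ifs <;> omega
      · intro _
        simp
        omega
      · intro _
        simp
        omega
    · refine ⟨fun j => min m (nu j), by simp; omega, ?_, ?_, ?_, ?_, ?_, ?_, ?_, ?_⟩
      · intro j
        have := hnu j
        simp only
        omega
      · intro j
        simp only
        omega
      · intro j
        have := hnu j
        simp only
        omega
      · intro j hj
        have h1 := hD j (by omega)
        have h2 := hD (j + 1) (by omega)
        have h3 := hSA j
        have h4 := hSN j
        have h5 := hA j hj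
        simp only
        omega
      · intro _
        have h1 := (hb (b - 1)).2 (by omega)
        simp only
        omega
      · intro j hj
        have h1 := hneedy j hj
        have h2 := hnu j
        simp only
        omega
      · intro h
        simp only at h ⊢
        have := hC (b - 1) (by omega)
        omega
      · intro hf
        have : ¬ m ≤ nu (b - 1) := fun h => hfm ⟨hf, h⟩
        simp only
        omega

theorem row_exists (r : ℕ → ℕ) (b : ℕ) : ∃ u : List ℕ, u.Pairwise (· ≥ ·) ∧
    (∀ j, u.count (j + 1) = if j < b then r j else 0) ∧ u.count 0 = 0 ∧
    u.length = ∑ j ∈ Finset.range b, r j := by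
  induction b with
  | zero => exact ⟨[], by simp⟩
  | succ b ih =>
    obtain ⟨u, h1, h2, h3, h4⟩ := ih
    refine ⟨List.replicate (r b) (b + 1) ++ u, ?_, ?_, ?_, ?_⟩
    · rw [List.pairwise_append]
      refine ⟨?_, h1, ?_⟩
      · rw [List.pairwise_replicate]; right; exact le_refl _
      · intro x hx y hy
        rw [List.mem_replicate] at hx
        rcases y with _ | y
        · exact Nat.zero_le _
        · have h5 := List.count_pos_iff.2 hy
          rw [h2] at h5
          split_ifs at h5 with h
          · show y + 1 ≤ x
            omega
          · omega
    · intro j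
      rw [List.count_append, h2, List.count_replicate]
      rcases lt_trichotomy j b with h | h | h
      · rw [if_neg (by simp; omega), if_pos h, if_pos (by omega)]; omega
      · subst h; simp
      · rw [if_neg (by simp; omega), if_neg (by omega), if_neg (by omega)]
    · rw [List.count_append, h3, List.count_replicate]
      simp
    · rw [List.length_append, h4, Finset.sum_range_succ, List.length_replicate]
      omega

theorem rowOffset_succ (a : List ℕ) (i : ℕ) :
    rowOffset a (i + 1) = rowOffset a i + a.getD i 0 := by
  unfold rowOffset
  rcases lt_or_ge i a.length with h | h
  · rw [List.take_add_one, List.sum_append, List.getD_eq_getElem?_getD]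
    simp [h]
  · rw [List.take_of_length_le h, List.take_of_length_le (by omega), List.getD_eq_default _ _ h]
    rfl

theorem rowOffset_le (a : List ℕ) (i : ℕ) : rowOffset a i ≤ a.sum := by
  unfold rowOffset
  conv_rhs => rw [← List.take_append_drop i a, List.sum_append]
  omega

theorem rowOffset_mono (a : List ℕ) : Monotone (rowOffset a) :=
  monotone_nat_of_le_succ (fun i => by rw [rowOffset_succ]; omega)

theorem rowOffset_append (a : List ℕ) (m i : ℕ) (h : i ≤ a.length) :
    rowOffset (a ++ [m]) i = rowOffset a i := by
  unfold rowOffset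
  rw [List.take_append_of_le_length h]

theorem pairwise_getD {u : List ℕ} (h : u.Pairwise (· ≥ ·)) {i j : ℕ} (hij : i ≤ j) :
    u.getD j 0 ≤ u.getD i 0 := by
  rcases lt_or_ge j u.length with hj | hj
  · rw [List.getD_eq_getElem _ _ hj, List.getD_eq_getElem _ _ (by omega)]
    rcases eq_or_lt_of_le hij with h1 | h1
    · subst h1; exact le_refl _
    · exact List.pairwise_iff_getElem.1 h i j _ hj h1
  · rw [List.getD_eq_default _ _ hj]; exact Nat.zero_le _

theorem ribbon_snoc {a : List ℕ} {ov : ℕ → Bool} {w u : List ℕ} {m : ℕ}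
    (hw : IsRibbonWord a ov w) (ha : ∀ x ∈ a, 0 < x) (hu : u.length = m)
    (hs : u.Pairwise (· ≥ ·))
    (hgap : a ≠ [] → ov (a.length - 1) = true → w.getD (w.length - 1) 0 < u.getD 0 0) :
    IsRibbonWord (a ++ [m]) ov (w ++ u) := by
  obtain ⟨h1, h2, h3⟩ := hw
  have hfull : rowOffset a a.length = w.length := by
    unfold rowOffset; rw [List.take_length, h1]
  have hpos : ∀ i, i < a.length → 0 < a.getD i 0 := by
    intro i hi
    rw [List.getD_eq_getElem _ _ hi]
    exact ha _ (List.getElem_mem hi)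
  refine ⟨by simp [h1, hu], ?_, ?_⟩
  · intro i j hi hj
    rw [List.length_append, List.length_singleton] at hi
    rw [rowOffset_append _ _ _ (by omega)]
    rcases lt_or_ge i a.length with h | h
    · rw [List.getD_append _ _ _ _ h] at hj
      have h4 := rowOffset_succ a i
      have h5 := rowOffset_le a (i + 1)
      rw [List.getD_append _ _ _ _ (by omega), List.getD_append _ _ _ _ (by omega)]
      exact h2 i j h hj
    · have : i = a.length := by omega
      subst this
      rw [hfull, List.getD_append_right _ _ _ _ (by omega),
        List.getD_append_right _ _ _ _ (by omega)]
      exact pairwise_getD hs (by omega)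
  · intro i hi ho
    rw [List.length_append, List.length_singleton] at hi
    rw [rowOffset_append _ _ _ (by omega)]
    rcases lt_or_ge (i + 1) a.length with h | h
    · have h4 := rowOffset_succ a (i + 1)
      have h5 := rowOffset_le a (i + 1 + 1)
      have h6 := hpos (i + 1) h
      rw [List.getD_append _ _ _ _ (by omega), List.getD_append _ _ _ _ (by omega)]
      exact h3 i h ho
    · have h7 : i + 1 = a.length := by omega
      have h4 := rowOffset_succ a i
      have h6 := hpos i (by omega)
      rw [h7] at h4 ⊢
      rw [hfull] at h4 ⊢
      rw [List.getD_append _ _ _ _ (by omega), List.getD_append_right _ _ _ _ (by omega)]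
      have h8 : i = a.length - 1 := by omega
      rw [h8] at ho
      rw [Nat.sub_self]
      exact hgap (by rintro rfl; simp at h7) ho

theorem yam_append {w u : List ℕ} (hw : IsYam w)
    (h : ∀ j, w.count (j + 2) + u.count (j + 2) ≤ w.count (j + 1)) : IsYam (w ++ u) := by
  intro k j
  rw [List.take_append, List.count_append, List.count_append]
  rcases le_or_gt k w.length with hk | hk
  · have : k - w.length = 0 := by omega
    rw [this]
    simpa using hw k j
  · rw [List.take_of_length_le (by omega)]
    have h1 := h j
    have h2 := (List.take_sublist (k - w.length) u).count_le (j + 2)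
    omega

theorem construct (a p : List ℕ) (ha : IsPartition a) (h2 : PartsGE a 2)
    (hp : IsOverlapSeq a p) (L : ℕ) :
    L ≤ a.length → ∀ (nu : ℕ → ℕ) (b : ℕ) (f : Prop),
    (∀ i, nu (i + 1) ≤ nu i) → (∀ i, 0 < nu i ↔ i < b) → b ≤ L →
    (∑ j ∈ Finset.range L, nu j = rowOffset a L) →
    (∀ j, j ≤ L → rowOffset a j ≤ ∑ i ∈ Finset.range j, nu i) →
    (∀ i, i < b → nu i + p.getD i 0 + rowOffset a i ≤ rowOffset a L + p.getD (L - 1) 0) →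
    (f → 2 ≤ b ∧ nu (b - 1) < nu (b - 2) ∧
      nu (b - 1) + p.getD (b - 1) 0 + rowOffset a (b - 1) + 1
        ≤ rowOffset a L + p.getD (L - 1) 0) →
    ∃ w, IsRibbonWord (a.take L) (ovOf p) w ∧ IsYam w ∧ (∀ j, w.count (j + 1) = nu j) ∧
      w.count 0 = 0 ∧ (f → w.getD (w.length - 1) 0 < b) := by
  induction L with
  | zero =>
    intro _ nu b f _ hb hbL _ _ _ hF
    refine ⟨[], ?_, ?_, ?_, by simp, ?_⟩
    · refine ⟨by simp, by simp, by simp⟩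
    · intro k j; simp
    · intro j
      have := mt (hb j).1 (by omega)
      simp; omega
    · intro hf
      have := (hF hf).1
      omega
  | succ L ih =>
    intro hL nu b f hnu hb hbL htot hD hC hF
    have hgetpos : ∀ i, i < a.length → 2 ≤ a.getD i 0 := by
      intro i hi
      rw [List.getD_eq_getElem _ _ hi]
      exact h2 _ (List.getElem_mem hi)
    have hpstep : ∀ i, i < L → p.getD i 0 = p.getD (i + 1) 0 ∨
        p.getD i 0 = p.getD (i + 1) 0 + 1 := fun i hi => hp.2.2 i (by omega)
    have hSN : ∀ i, ∑ j ∈ Finset.range (i + 1), nu j = ∑ j ∈ Finset.range i, nu j + nu i :=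
      fun i => Finset.sum_range_succ _ _
    obtain ⟨t, t0, tanti, tle, tstrip, tD, tbot, tC, tCb, tF⟩ :=
      strip_exists (fun i => a.getD i 0) (fun i => p.getD i 0) nu (rowOffset a)
        (fun i => ∑ j ∈ Finset.range i, nu j) L b f
        (rowOffset_succ a) (by simp) (by simp [rowOffset]) hSN
        (fun i hi => pairwise_getD ha.1 hi) (hgetpos L (by omega)) hpstep hnu hb hbL htot hD
        (by simpa using hC) (by simpa using hF)
    set m := a.getD L 0 with hmdef
    have hm2 : 2 ≤ m := hgetpos L (by omega)
    have hSAL := rowOffset_succ a L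
    rw [← hmdef] at hSAL
    have hb1 : 1 ≤ b := by
      have := (hb 0).1 (by have := tle 0; omega)
      omega
    have htb : ∀ j, b ≤ j → nu j = 0 ∧ t j = 0 := by
      intro j hj
      have h3 := mt (hb j).1 (by omega)
      have h4 := tle j
      omega
    have hpanti : ∀ k i, i + k ≤ L → p.getD (i + k) 0 ≤ p.getD i 0 := by
      intro k
      induction k with
      | zero => intro i _; exact le_refl _
      | succ k ihk =>
        intro i hi
        have h1 := ihk i (by omega)
        have h3 := hpstep (i + k) (by omega)
        have : i + (k + 1) = i + k + 1 := by ring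
        rw [this]
        omega
    have hpL : p.getD L 0 ≤ p.getD (L - 1) 0 := by
      have h1 := hpanti (L - (L - 1)) (L - 1) (by omega)
      have h3 : L - 1 + (L - (L - 1)) = L := by omega
      rwa [h3] at h1
    -- the smaller shape
    set nu' : ℕ → ℕ := fun j => nu j - t j + t (j + 1) with hnu'
    have hnu'e : ∀ j, nu' j + t j = nu j + t (j + 1) := by
      intro j
      have := tle j
      simp only [hnu']
      omega
    have hSN' : ∀ j, ∑ i ∈ Finset.range j, nu' i + m = ∑ i ∈ Finset.range j, nu i + t j := by
      intro j
      induction j with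
      | zero => simp [t0]
      | succ j ihj =>
        rw [Finset.sum_range_succ, Finset.sum_range_succ]
        have := hnu'e j
        omega
    set b' : ℕ := if t (b - 1) < nu (b - 1) then b else b - 1 with hb'
    have hb'c : (t (b - 1) < nu (b - 1) ∧ b' = b) ∨ (t (b - 1) = nu (b - 1) ∧ b' = b - 1) := by
      have := tle (b - 1)
      simp only [hb']
      split_ifs with h
      · left; exact ⟨h, rfl⟩
      · right; exact ⟨by omega, rfl⟩
    have htb0 := htb (b - 1 + 1) (by omega)
    have hbb := hnu'e (b - 1)
    have hSNL := hSN L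
    have hDL := tD L le_rfl
    have hIH := ih (by omega) nu' b' (p.getD (L - 1) 0 = p.getD L 0 + 1 ∧ b' = b)
      (by
        intro i
        have h1 := hnu'e i
        have h3 := hnu'e (i + 1)
        have h4 := tstrip i
        have h5 := tle (i + 1)
        have h6 := tanti (i + 1)
        omega)
      (by
        intro i
        have h1 := hnu'e i
        rcases lt_trichotomy i (b - 1) with h | h | h
        · have h3 := tstrip i
          have h4 := (hb (i + 1)).2 (by omega)
          have h5 := tle (i + 1)
          constructor
          · intro _; omega
          · intro _; omega
        · subst h
          omega
        · have h3 := htb i (by omega)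
          have h4 := htb (i + 1) (by omega)
          omega)
      (by
        rcases hb'c with h | h
        · rcases eq_or_ne b (L + 1) with h3 | h3
          · exfalso
            rw [h3, Nat.add_sub_cancel] at h
            omega
          · omega
        · omega)
      (by
        have h1 := hSN' L
        have h3 := tle L
        omega)
      (by
        intro j hj
        have h1 := hSN' j
        have h3 := tD j hj
        omega)
      (by
        intro i hi
        have h1 := hnu'e i
        rcases lt_or_ge (i + 1) b with h | h
        · have := tC i h
          omega
        · have h3 : i = b - 1 := by omega
          rcases hb'c with h4 | h4
          · have h5 := tCb h4.1
            subst h3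
            omega
          · omega)
      (by
        rintro ⟨ho, hbe⟩
        have hlt : t (b - 1) < nu (b - 1) := by omega
        have h3 := tCb hlt
        have hb2 : 2 ≤ b := by
          by_contra hcon
          have hb1 : b = 1 := by omega
          subst hb1
          have h4 : ∀ k, ∑ j ∈ Finset.range (k + 1), nu j = nu 0 := by
            intro k
            induction k with
            | zero => simp
            | succ k ihk =>
              rw [Finset.sum_range_succ, ihk, (htb (k + 1) (by omega)).1]
              rfl
          have h5 := h4 L
          have h6 := hpanti (L - 1) 0 (by omega)
          rw [zero_add] at h6
          simp only [Nat.sub_self] at h3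
          have h7 : rowOffset a 0 = 0 := by simp [rowOffset]
          omega
        rw [hbe]
        refine ⟨hb2, ?_, by omega⟩
        have h4 := hnu'e (b - 2)
        have h5 := tstrip (b - 2)
        have h6 : b - 2 + 1 = b - 1 := by omega
        rw [h6] at h4 h5
        have h7 := tbot ho
        omega)
    obtain ⟨w, hw, hy, hcnt, hc0, hlast⟩ := hIH
    obtain ⟨u, us, ucnt, uc0, ulen⟩ := row_exists (fun j => t j - t (j + 1)) b
    have ulen' : u.length = m := by
      rw [ulen]
      have h1 : ∀ k, ∑ j ∈ Finset.range k, (t j - t (j + 1)) + t k = m := by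
        intro k
        induction k with
        | zero => simp [t0]
        | succ k ihk =>
          rw [Finset.sum_range_succ]
          have := tanti k
          omega
      have h3 := h1 b
      have h4 := (htb b le_rfl).2
      omega
    have ucnt' : ∀ j, u.count (j + 1) + t (j + 1) = t j := by
      intro j
      rw [ucnt]
      have h1 := tanti j
      split_ifs with h
      · omega
      · have := (htb j (by omega)).2
        omega
    have htake : a.take (L + 1) = a.take L ++ [m] := by
      rw [List.take_add_one, hmdef, List.getD_eq_getElem _ _ (by omega),
        List.getElem?_eq_getElem (by omega)]
      rfl
    have umem : ∀ x ∈ u, x ≤ b := by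
      intro x hx
      rcases x with _ | x
      · omega
      · have h1 := List.count_pos_iff.2 hx
        rw [ucnt] at h1
        split_ifs at h1 with h
        · omega
        · omega
    refine ⟨w ++ u, ?_, ?_, ?_, ?_, ?_⟩
    · rw [htake]
      apply ribbon_snoc hw
      · intro x hx
        exact ha.2 x (List.mem_of_mem_take hx)
      · exact ulen'
      · exact us
      · intro hne ho
        have hlen : (a.take L).length = L := by rw [List.length_take]; omega
        have hL1 : 1 ≤ L := by
          rcases Nat.eq_zero_or_pos L with h | h
          · subst h; simp at hne
          · exact h
        rw [hlen] at ho
        have e1 : L - 1 + 1 = L := by omega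
        simp only [ovOf, e1, decide_eq_true_eq] at ho
        have h1 := tbot ho
        have hbu : b ≤ u.getD 0 0 := by
          have h3 := ucnt' (b - 1)
          have h4 : b - 1 + 1 = b := by omega
          rw [h4] at h3 htb0
          have h5 : b ∈ u := List.count_pos_iff.1 (by omega)
          obtain ⟨i, hi, hib⟩ := List.getElem_of_mem h5
          have h6 := pairwise_getD us (Nat.zero_le i)
          rw [List.getD_eq_getElem _ _ hi, hib] at h6
          exact h6
        rcases hb'c with h | h
        · have := hlast ⟨ho, h.2⟩
          omega
        · refine lt_of_lt_of_le ?_ hbu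
          rcases Nat.eq_zero_or_pos w.length with h3 | h3
          · rw [List.getD_eq_default _ _ (by omega)]; omega
          · rw [List.getD_eq_getElem _ _ (by omega)]
            generalize hx : w[w.length - 1] = x
            have hxm : x ∈ w := hx ▸ List.getElem_mem _
            rcases x with _ | x
            · omega
            · have h4 := List.count_pos_iff.2 hxm
              rw [hcnt] at h4
              by_contra hcon
              have h5 := hnu'e x
              rcases eq_or_ne x (b - 1) with h6 | h6
              · subst h6; omega
              · have h7 := htb x (by omega)
                have h8 := htb (x + 1) (by omega)
                omega
    · apply yam_append hy
      intro j
      have h1 := hcnt j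
      have h3 := hcnt (j + 1)
      have h4 := ucnt' (j + 1)
      have h5 := hnu'e j
      have h6 := hnu'e (j + 1)
      have h7 := tstrip j
      have e : j + 1 + 1 = j + 2 := rfl
      rw [e] at h3 h4 h6
      omega
    · intro j
      rw [List.count_append, hcnt]
      have h4 := ucnt' j
      have h5 := hnu'e j
      omega
    · rw [List.count_append, hc0, uc0]
    · intro hf
      have h1 := tF hf
      rw [List.length_append, List.getD_append_right _ _ _ _ (by omega)]
      have e1 : w.length + u.length - 1 - w.length = u.length - 1 := by omega
      rw [e1]
      have h3 : ∃ x ∈ u, x < b := by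
        by_contra hcon
        push Not at hcon
        have h4 : u.count b = u.length := by
          rw [List.count_eq_length]
          intro x hx
          have h5 := hcon x hx
          have h6 := umem x hx
          omega
        have h5 := ucnt' (b - 1)
        have h6 : b - 1 + 1 = b := by omega
        rw [h6] at h5
        omega
      obtain ⟨x, hx, hxb⟩ := h3
      obtain ⟨i, hi, hib⟩ := List.getElem_of_mem hx
      have h6 := pairwise_getD us (show i ≤ u.length - 1 by omega)
      rw [List.getD_eq_getElem _ _ hi, hib] at h6
      omega

theorem getD_drop' (l : List ℕ) (n k : ℕ) : (l.drop n).getD k 0 = l.getD (n + k) 0 := by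
  simp [List.getD_eq_getElem?_getD]

theorem rowOffset_drop (a : List ℕ) (i k : ℕ) :
    rowOffset a (i + k) = rowOffset a i + rowOffset (a.drop i) k := by
  unfold rowOffset
  rw [List.take_add, List.sum_append]

theorem ribbon_drop {a : List ℕ} {ov : ℕ → Bool} {w : List ℕ} (hw : IsRibbonWord a ov w)
    (ha : ∀ x ∈ a, 0 < x) (i : ℕ) :
    IsRibbonWord (a.drop i) (fun k => ov (i + k)) (w.drop (rowOffset a i)) := by
  obtain ⟨h1, h2, h3⟩ := hw
  refine ⟨?_, ?_, ?_⟩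
  · rw [List.length_drop, h1]
    have h4 : rowOffset a i + (a.drop i).sum = a.sum := by
      unfold rowOffset
      conv_rhs => rw [← List.take_append_drop i a, List.sum_append]
    omega
  · intro k j hk hj
    rw [getD_drop'] at hj
    rw [getD_drop', getD_drop']
    rw [List.length_drop] at hk
    have h4 := h2 (i + k) j (by omega) hj
    rw [rowOffset_drop] at h4
    simpa only [add_assoc] using h4
  · intro k hk ho
    rw [List.length_drop] at hk
    rw [getD_drop', getD_drop']
    have h4 := h3 (i + k) (by omega) ho
    rw [add_assoc, rowOffset_drop] at h4
    have h5 : 0 < rowOffset (a.drop i) (k + 1) := by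
      rw [rowOffset_succ]
      have : 0 < (a.drop i).getD k 0 := by
        rw [getD_drop', List.getD_eq_getElem _ _ (by omega)]
        exact ha _ (List.getElem_mem _)
      omega
    rw [Nat.add_sub_assoc h5] at h4
    exact h4

theorem ribbon_cons {m : ℕ} {a : List ℕ} {ov : ℕ → Bool} {w : List ℕ}
    (hw : IsRibbonWord (m :: a) ov w) (ha : ∀ x ∈ m :: a, 0 < x) :
    ∃ u v, w = u ++ v ∧ u.length = m ∧ u.Pairwise (· ≥ ·) ∧
      IsRibbonWord a (fun k => ov (1 + k)) v ∧
      (a ≠ [] → ov 0 = true → u.getD (m - 1) 0 < v.getD 0 0) := by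
  have hd := ribbon_drop hw ha 1
  have e0 : rowOffset (m :: a) 0 = 0 := by simp [rowOffset]
  have e1 : rowOffset (m :: a) 1 = m := by simp [rowOffset]
  rw [e1] at hd
  have hm : 0 < m := ha m (by simp)
  obtain ⟨h1, h2, h3⟩ := hw
  have hlen : m ≤ w.length := by rw [h1]; simp
  refine ⟨w.take m, w.drop m, (List.take_append_drop m w).symm, by simp; omega, ?_, hd, ?_⟩
  · rw [← List.isChain_iff_pairwise, List.isChain_iff_getElem]
    intro i hi
    rw [List.length_take] at hi
    have h4 := h2 0 i (by simp) (by simp; omega)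
    rw [e0, zero_add, List.getD_eq_getElem _ _ (by omega), List.getD_eq_getElem _ _ (by omega)] at h4
    simpa using h4
  · intro hne ho
    have h4 := h3 0 (by simp; exact List.length_pos_iff.2 hne) ho
    rw [zero_add, e1] at h4
    rw [getD_drop', add_zero]
    rw [← List.take_append_drop m w, List.getD_append _ _ _ _ (by simp; omega)] at h4
    rwa [List.take_append_drop] at h4

theorem count_ends (u : List ℕ) (x : ℕ) (h : 2 ≤ u.length) :
    u.count x + (if u.getD 0 0 = x then 0 else 1) + (if u.getD (u.length - 1) 0 = x then 0 else 1)
      ≤ u.length := by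
  rcases u with _ | ⟨y, v⟩
  · simp at h
  · rcases List.eq_nil_or_concat v with rfl | ⟨v', z, rfl⟩
    · simp at h
    · have h1 := List.count_le_length (a := x) (l := v')
      have e : (y :: (v' ++ [z])).getD ((y :: (v' ++ [z])).length - 1) 0 = z := by
        simp [List.getD_eq_getElem?_getD]
      rw [List.concat_eq_append, e]
      simp only [List.count_cons, List.count_append, List.count_nil, List.length_cons,
        List.length_append, List.length_nil, List.getD_cons_zero, beq_iff_eq]
      split_ifs <;> omega

theorem count_bound (a : List ℕ) : ∀ (ov : ℕ → Bool) (w : List ℕ) (q : ℕ → ℕ) (x : ℕ),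
    IsRibbonWord a ov w → PartsGE a 2 → q (a.length - 1) = 0 →
    (∀ i, i + 1 < a.length → q i ≤ q (i + 1) + if ov i = true then 1 else 0) →
    w.count x + q 0 + (if x < w.getD 0 0 then 1 else 0) ≤ a.sum := by
  induction a with
  | nil =>
    intro ov w q x hw _ hq _
    have h1 : w = [] := List.eq_nil_of_length_eq_zero (by simpa using hw.1)
    subst h1
    simp at hq
    simp [hq]
  | cons m a ih =>
    intro ov w q x hw h2 hq hstep
    have hm : 2 ≤ m := h2 m (by simp)
    obtain ⟨u, v, rfl, hu, hs, hv, hgap⟩ :=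
      ribbon_cons hw (fun x hx => by have := h2 x hx; omega)
    have hend := count_ends u x (by omega)
    rw [hu] at hend
    rw [List.count_append, List.getD_append _ _ _ _ (by omega), List.sum_cons]
    rcases eq_or_ne a [] with rfl | hne
    · have h1 : v = [] := List.eq_nil_of_length_eq_zero (by simpa using hv.1)
      subst h1
      simp at hq
      simp only [List.count_nil, List.sum_nil, hq]
      split_ifs at hend ⊢ <;> omega
    · have hpos : 0 < a.length := List.length_pos_iff.2 hne
      have h3 := ih (fun k => ov (1 + k)) v (fun k => q (k + 1)) x hv
        (fun y hy => h2 y (by simp [hy]))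
        (by
          simp only [List.length_cons, Nat.add_sub_cancel] at hq
          have e : a.length - 1 + 1 = a.length := by omega
          simpa only [e] using hq)
        (by
          intro i hi
          have := hstep (i + 1) (by simp; omega)
          rw [add_comm i 1] at this
          simpa only [add_comm] using this)
      have h4 := hstep 0 (by simp; omega)
      have h5 := hgap hne
      simp only [zero_add] at h3 h4
      by_cases ho : ov 0 = true
      · have h6 := h5 ho
        rw [if_pos ho] at h4
        split_ifs at h3 hend ⊢ <;> omega
      · rw [if_neg ho] at h4
        split_ifs at h3 hend ⊢ <;> omega

theorem letters_le {a w : List ℕ} {ov : ℕ → Bool} (hw : IsRibbonWord a ov w)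
    (ha : ∀ x ∈ a, 0 < x) (hy : IsYam w) (i : ℕ) :
    i ≤ a.length → ∀ x ∈ w.take (rowOffset a i), x ≤ i := by
  induction i with
  | zero => intro _ x hx; simp [rowOffset] at hx
  | succ i ih =>
    intro hi x hx
    have ih' := ih (by omega)
    rw [rowOffset_succ, List.take_add, List.mem_append] at hx
    rcases hx with hx | hx
    · have := ih' x hx; omega
    · have hd := ribbon_drop hw ha i
      rw [List.drop_eq_getElem_cons (by omega : i < a.length)] at hd
      obtain ⟨u, v, huv, hu, hs, -, -⟩ := ribbon_cons hd (by
        intro y hy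
        rw [← List.drop_eq_getElem_cons (by omega : i < a.length)] at hy
        exact ha y (List.mem_of_mem_drop hy))
      have e1 : a.getD i 0 = u.length := by
        rw [hu, List.getD_eq_getElem _ _ (by omega)]
      have hu0 : 0 < u.length := by rw [hu]; exact ha _ (List.getElem_mem _)
      rw [huv, e1, List.take_left'  rfl] at hx
      -- first letter of the row
      rcases u with _ | ⟨y, u'⟩
      · simp at hu0
      · have hxy : x ≤ y := by
          rcases List.mem_cons.1 hx with rfl | h
          · exact le_rfl
          · exact (List.pairwise_cons.1 hs).1 x h
        refine le_trans hxy ?_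
        rcases y with _ | _ | y
        · omega
        · omega
        · have h1 := hy (rowOffset a i + 1) y
          rw [List.take_add, huv] at h1
          simp only [List.cons_append, List.take_succ_cons, List.take_zero, List.count_append,
            List.count_singleton, beq_iff_eq] at h1
          simp at h1
          have h2 : 0 < (w.take (rowOffset a i)).count (y + 1) := by omega
          have h3 := ih' _ (List.count_pos_iff.1 h2)
          omega

theorem length_eq_sum_count (l : List ℕ) (i : ℕ) (h : ∀ x ∈ l, x ≤ i) (h0 : l.count 0 = 0) :
    l.length = ∑ j ∈ Finset.range i, l.count (j + 1) := by
  have h1 := Multiset.sum_count_eq_card (s := Finset.range (i + 1)) (m := (l : Multiset ℕ))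
    (by intro x hx; have := h x (by simpa using hx); simp; omega)
  rw [Finset.sum_range_succ'] at h1
  simp only [Multiset.coe_count, Multiset.coe_card] at h1
  omega

theorem rowOffset_eq_sum (a : List ℕ) (i : ℕ) :
    rowOffset a i = ∑ j ∈ Finset.range i, a.getD j 0 := by
  induction i with
  | zero => simp [rowOffset]
  | succ i ih => rw [rowOffset_succ, ih, Finset.sum_range_succ]

theorem rowOffset_full (a : List ℕ) (i : ℕ) (h : a.length ≤ i) : rowOffset a i = a.sum := by
  unfold rowOffset
  rw [List.take_of_length_le h]

theorem rowOffset_add_drop (a : List ℕ) (i : ℕ) : rowOffset a i + (a.drop i).sum = a.sum := by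
  unfold rowOffset
  conv_rhs => rw [← List.take_append_drop i a, List.sum_append]

theorem part_pos {nu : List ℕ} (h : IsPartition nu) (i : ℕ) : 0 < nu.getD i 0 ↔ i < nu.length := by
  constructor
  · intro h1
    by_contra h2
    rw [List.getD_eq_default _ _ (by omega)] at h1
    omega
  · intro h1
    rw [List.getD_eq_getElem _ _ h1]
    exact h.2 _ (List.getElem_mem _)

theorem p_last {a p : List ℕ} (hp : IsOverlapSeq a p) (i : ℕ) (h : a.length ≤ i + 1) :
    p.getD i 0 = 0 := by
  rcases eq_or_ne i (a.length - 1) with h1 | h1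
  · rw [h1]; exact hp.2.1
  · exact List.getD_eq_default _ _ (by rw [hp.1]; omega)

theorem p_anti {a p : List ℕ} (hp : IsOverlapSeq a p) : Antitone (fun i => p.getD i 0) := by
  apply antitone_nat_of_succ_le
  intro i
  rcases lt_or_ge (i + 1) a.length with h | h
  · have := hp.2.2 i h
    omega
  · have := p_last hp (i + 1) (by omega)
    omega

theorem support_iff (a p : List ℕ) (ha : IsPartition a) (h2 : PartsGE a 2)
    (hp : IsOverlapSeq a p) (nu : List ℕ) (hnu : IsPartition nu) :
    InSupport a p nu ↔ DomLE a nu ∧ ∀ i, nu.getD i 0 + p.getD i 0 ≤ (a.drop i).sum := by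
  constructor
  · rintro ⟨w, hw, hy, hc, hc0⟩
    have hlet := letters_le hw ha.2 hy
    have hwlen := hw.1
    have hwtake : w.take (rowOffset a a.length) = w := by
      rw [rowOffset_full _ _ le_rfl]
      exact List.take_of_length_le (by omega)
    have hpre : ∀ i, i ≤ a.length → rowOffset a i ≤ rowOffset nu i := by
      intro i hi
      have h1 := length_eq_sum_count _ i (hlet i hi) (by
        have := (List.take_sublist (rowOffset a i) w).count_le 0
        omega)
      have h3 : (w.take (rowOffset a i)).length = rowOffset a i := by
        rw [List.length_take, hwlen]
        exact min_eq_left (rowOffset_le a i)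
      rw [h3] at h1
      rw [h1, rowOffset_eq_sum nu]
      apply Finset.sum_le_sum
      intro j _
      rw [← hc j]
      exact (List.take_sublist _ w).count_le _
    have hnulen : nu.length ≤ a.length := by
      by_contra hcon
      have h1 := (part_pos hnu a.length).2 (by omega)
      rw [← hc] at h1
      have h3 := hlet a.length le_rfl (a.length + 1) (by
        rw [hwtake]; exact List.count_pos_iff.1 h1)
      omega
    have hsum : a.sum = nu.sum := by
      rw [← hwlen, ← rowOffset_full nu a.length hnulen, rowOffset_eq_sum]
      have h1 := length_eq_sum_count w a.length (by
        have := hlet a.length le_rfl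
        rwa [hwtake] at this) hc0
      rw [h1]
      exact Finset.sum_congr rfl (fun j _ => hc j)
    refine ⟨⟨hsum, ?_⟩, ?_⟩
    · intro i
      rcases le_or_gt i a.length with h | h
      · exact hpre i h
      · show rowOffset a i ≤ rowOffset nu i
        rw [rowOffset_full a i (by omega), rowOffset_full nu i (by omega), hsum]
    · intro i
      rcases lt_or_ge i a.length with h | h
      · have h1 := count_bound (a.drop i) (fun k => ovOf p (i + k)) (w.drop (rowOffset a i))
          (fun k => p.getD (i + k) 0) (i + 1) (ribbon_drop hw ha.2 i)
          (fun x hx => h2 x (List.mem_of_mem_drop hx))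
          (p_last hp _ (by rw [List.length_drop]; omega))
          (by
            intro k hk
            rw [List.length_drop] at hk
            have h1 := hp.2.2 (i + k) (by omega)
            simp only [ovOf, decide_eq_true_eq]
            rw [← add_assoc]
            split_ifs <;> omega)
        have h3 : (w.take (rowOffset a i)).count (i + 1) = 0 := by
          rw [List.count_eq_zero]
          intro hm
          have := hlet i (by omega) _ hm
          omega
        have h4 := hc i
        rw [← List.take_append_drop (rowOffset a i) w, List.count_append, h3] at h4
        simp only [add_zero] at h1
        omega
      · rw [p_last hp i (by omega), List.getD_eq_default _ _ (by omega)]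
        omega
  · rintro ⟨⟨hsum, hdom⟩, hC⟩
    have hdom' : ∀ i, rowOffset a i ≤ rowOffset nu i := hdom
    have hnulen : nu.length ≤ a.length := by
      by_contra hcon
      have h1 := (part_pos hnu a.length).2 (by omega)
      have h3 := rowOffset_succ nu a.length
      have h4 := rowOffset_le nu (a.length + 1)
      have h5 := hdom' a.length
      rw [rowOffset_full a _ le_rfl] at h5
      omega
    obtain ⟨w, hw, hy, hc, hc0, -⟩ := construct a p ha h2 hp a.length le_rfl
      (fun i => nu.getD i 0) nu.length False
      (fun i => pairwise_getD hnu.1 (by omega)) (part_pos hnu) hnulen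
      (by rw [← rowOffset_eq_sum, rowOffset_full _ _ le_rfl, rowOffset_full _ _ hnulen, hsum])
      (fun j _ => by rw [← rowOffset_eq_sum]; exact hdom' j)
      (fun i _ => by
        have h1 := hC i
        have h3 := rowOffset_add_drop a i
        rw [rowOffset_full a a.length le_rfl]
        omega)
      (fun h => h.elim)
    rw [List.take_length] at hw
    exact ⟨w, hw, hy, hc, hc0⟩

theorem lenp_spec {a p : List ℕ} (hp : IsOverlapSeq a p) (i : ℕ) (h : lenp p ≤ i) :
    p.getD i 0 = 0 := by
  by_contra hne
  have hi : i < p.length := by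
    by_contra hcon
    exact hne (List.getD_eq_default _ _ (by omega))
  have h1 : (p.take (i + 1)).countP (fun x => decide (x ≠ 0)) = (p.take (i + 1)).length := by
    rw [List.countP_eq_length]
    intro x hx
    obtain ⟨k, hk, hkx⟩ := List.getElem_of_mem hx
    rw [List.length_take] at hk
    have h3 : p.getD i 0 ≤ p.getD k 0 := p_anti hp (by omega : k ≤ i)
    rw [List.getElem_take] at hkx
    rw [List.getD_eq_getElem p 0 (by omega : k < p.length), hkx] at h3
    simp
    omega
  have h3 := (List.take_sublist (i + 1) p).countP_le (p := fun x => decide (x ≠ 0))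
  rw [h1, List.length_take] at h3
  unfold lenp at h
  omega

theorem p_le_drop {a p : List ℕ} (h2 : PartsGE a 2) (hp : IsOverlapSeq a p) :
    ∀ k i, i + k = a.length → p.getD i 0 ≤ (a.drop i).sum := by
  intro k
  induction k with
  | zero => intro i hi; rw [p_last hp i (by omega)]; omega
  | succ k ih =>
    intro i hi
    have h1 := ih (i + 1) (by omega)
    rw [List.drop_eq_getElem_cons (by omega : i < a.length), List.sum_cons]
    have h3 := h2 _ (List.getElem_mem (by omega : i < a.length))
    rcases lt_or_ge (i + 1) a.length with h | h
    · have := hp.2.2 i h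
      omega
    · rw [p_last hp i (by omega)]; omega

theorem p_le_drop' {a p : List ℕ} (h2 : PartsGE a 2) (hp : IsOverlapSeq a p) (i : ℕ) :
    p.getD i 0 ≤ (a.drop i).sum := by
  rcases le_or_gt i a.length with h | h
  · exact p_le_drop h2 hp (a.length - i) i (by omega)
  · rw [p_last hp i (by omega)]; omega

theorem interval_iff (a p : List ℕ) (h2 : PartsGE a 2) (hp : IsOverlapSeq a p) (nu : List ℕ) :
    InInterval a p nu ↔ DomLE a nu ∧ nu.getD 0 0 + p.getD 0 0 ≤ a.sum := by
  have h0 := p_le_drop' h2 hp 0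
  rw [List.drop_zero] at h0
  have hone : ∀ l : List ℕ, (l.take 1).sum = l.getD 0 0 := by
    intro l; cases l <;> simp
  unfold InInterval
  apply and_congr_right
  intro hd
  constructor
  · rintro ⟨hs, h⟩
    have h1 := h 1
    rw [hone, hone] at h1
    simp only [List.getD_cons_zero] at h1
    omega
  · intro h
    have hs : nu.sum = [a.sum - p.getD 0 0, p.getD 0 0].sum := by
      rw [← hd.1, List.sum_cons, List.sum_singleton]; omega
    refine ⟨hs, ?_⟩
    intro i
    rcases i with _ | _ | i
    · simp
    · rw [zero_add, hone, hone]
      simp only [List.getD_cons_zero]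
      omega
    · rw [List.take_of_length_le (l := [a.sum - p.getD 0 0, p.getD 0 0]) (by simp), ← hs]
      exact rowOffset_le nu _

theorem support_iff' (a p : List ℕ) (ha : IsPartition a) (h2 : PartsGE a 2)
    (hp : IsOverlapSeq a p) (nu : List ℕ) (hnu : IsPartition nu) :
    InSupport a p nu ↔ InInterval a p nu ∧
      ∀ i, 1 ≤ i → i + 1 ≤ lenp p → nu.getD i 0 + p.getD i 0 ≤ (a.drop i).sum := by
  rw [support_iff a p ha h2 hp nu hnu, interval_iff a p h2 hp nu, and_assoc]
  apply and_congr_right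
  intro hd
  constructor
  · intro h
    exact ⟨by simpa using h 0, fun i _ _ => h i⟩
  · rintro ⟨h0, h⟩ i
    rcases Nat.eq_zero_or_pos i with hi | hi
    · subst hi; simpa using h0
    · rcases le_or_gt (i + 1) (lenp p) with h1 | h1
      · exact h i hi h1
      · rw [lenp_spec hp i (by omega)]
        have h3 := rowOffset_add_drop a i
        have h4 := hd.1
        have h5 : rowOffset a i ≤ rowOffset nu i := hd.2 i
        have h6 := rowOffset_succ nu i
        have h7 := rowOffset_le nu (i + 1)
        omega

/-- Corollary `char`: if `ℓ(p) ≤ 1` then `R_a^p` has full Schur support;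
and if `ℓ(p) ≥ 2`, then a partition `nu` of the Schur interval fails to lie in the support of
`R_a^p` iff `ν_{i+1} ≥ ϱ_i = Σ_{q=i+1}^{ℓ(a)} a_q − p_{i+1} + 1` for some
`i ∈ {1,…,ℓ(p)−1}`, equivalently iff `ν_{i+1}` exceeds the number
`Σ_{q=i+1}^{ℓ(a)} a_q − p_{i+1}` of columns of the last `ℓ(a)−i` rows of `R_a^p` for some
such `i`. -/
theorem not_in_support_characterization
    (a p : List ℕ) (ha : IsPartition a) (h2 : PartsGE a 2) (hp : IsOverlapSeq a p) :
    (lenp p ≤ 1 → FullSupport a p) ∧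
    (2 ≤ lenp p → ∀ nu : List ℕ, IsPartition nu → InInterval a p nu →
      ((¬ InSupport a p nu ↔
          ∃ i, 1 ≤ i ∧ i + 1 ≤ lenp p ∧ rho a p i ≤ nu.getD i 0) ∧
       (¬ InSupport a p nu ↔
          ∃ i, 1 ≤ i ∧ i + 1 ≤ lenp p ∧ (a.drop i).sum - p.getD i 0 < nu.getD i 0))) := by
  have key := support_iff' a p ha h2 hp
  constructor
  · intro hl
    ext nu
    constructor
    · rintro ⟨h1, h3⟩
      exact ⟨h1, ((key nu h1).1 h3).1⟩
    · rintro ⟨h1, h3⟩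
      exact ⟨h1, (key nu h1).2 ⟨h3, fun i hi hi' => by omega⟩⟩
  · intro _ nu hnu hint
    have h1 : ¬ InSupport a p nu ↔ ∃ i, 1 ≤ i ∧ i + 1 ≤ lenp p ∧
        (a.drop i).sum < nu.getD i 0 + p.getD i 0 := by
      rw [key nu hnu]
      constructor
      · intro h
        by_contra hcon
        push Not at hcon
        exact h ⟨hint, hcon⟩
      · rintro ⟨i, hi, hi', hlt⟩ ⟨_, h⟩
        have := h i hi hi'
        omega
    rw [h1]
    constructor
    · refine exists_congr fun i => and_congr_right fun _ => and_congr_right fun _ => ?_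
      unfold rho
      omega
    · refine exists_congr fun i => and_congr_right fun _ => and_congr_right fun _ => ?_
      have := p_le_drop' h2 hp i
      omega

end RibbonSupport
end
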